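/- Let A be a C*-algebra admitting an AF presentation that has the Fermion property. Then A is isomorphic as a Banach space to C₀(ℕ, A). -/

import Mathlib

/-!
Statement 4.

A C*-algebra with an AF presentation having the Fermion property is isomorphic
as a Banach space to `C₀(ℕ, A)`, the space of sequences in `A` vanishing at
infinity with the supremum norm.
-/

/-- `S` is an AF presentation of the C*-algebra `A`: an increasing sequence of
finite-dimensional *-subalgebras whose union is dense. -/
def IsAFPresentation (A : Type*) [NonUnitalCStarAlgebra A]
    (S : ℕ → NonUnitalStarSubalgebra ℂ A) : Prop :=
  Monotone S ∧ (∀ k, FiniteDimensional ℂ (S k)) ∧ Dense (⋃ k, (S k : Set A))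

/-- The presentation `S` has the Fermion property: there are indices
`n 0 < n 1 < ⋯` and nonzero minimal central projections `p k` of `S (n k)` such
that for every minimal projection `e` of the corner `p k • S (n k) • p k`,
the projection `p (k+1) * e` is nonzero and is not a minimal projection of
`S (n (k+1))`. -/
def HasFermionProperty (A : Type*) [NonUnitalCStarAlgebra A]
    (S : ℕ → NonUnitalStarSubalgebra ℂ A) : Prop :=
  ∃ (n : ℕ → ℕ) (p : ℕ → A),
    StrictMono n ∧
    (∀ k, p k ∈ S (n k)) ∧
    (∀ k, p k * p k = p k ∧ star (p k) = p k) ∧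
    (∀ k, p k ≠ 0) ∧
    -- `p k` is central in `S (n k)`
    (∀ k, ∀ a ∈ S (n k), p k * a = a * p k) ∧
    -- `p k` is minimal among the central projections of `S (n k)`
    (∀ k, ∀ q ∈ S (n k), (q * q = q ∧ star q = q) → (∀ a ∈ S (n k), q * a = a * q) →
      q * p k = q → q ≠ 0 → q = p k) ∧
    -- every minimal projection `e` of the corner `p k * S (n k) * p k` meets the
    -- next summand with multiplicity at least two
    (∀ k, ∀ e ∈ S (n k), (e * e = e ∧ star e = e) → e ≠ 0 → e * p k = e →
      (∀ a ∈ S (n k), ∃ c : ℂ, e * a * e = c • e) →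
      (p (k + 1) * e ≠ 0 ∧
        ∃ q ∈ S (n (k + 1)), (q * q = q ∧ star q = q) ∧ q ≠ 0 ∧
          q * (p (k + 1) * e) = q ∧ (p (k + 1) * e) * q = q ∧ q ≠ p (k + 1) * e))

/-!
By Pełczyński's decomposition method it suffices that `C₀(ℕ, A)` is complemented in `A`, and in fact
every AF algebra `C` is. The Fermion property makes each minimal projection of some level contain
arbitrarily many orthogonal copies of a single minimal projection of a later level. So the matrix
units of a finite-dimensional subalgebra of (the unitization of) `C` can be replaced by partial
isometries in `A` which all have the same minimal source: this maps the subalgebra isometrically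
and block diagonally into `A`, and taking block diagonal coefficients is a contractive left inverse.
Refining the matrix units of one subalgebra to those of the next cuts the partial isometries down
to a smaller support. The left inverses are compatible with this, but the embeddings only extend
each other after what was cut off, the compression of the earlier embedding to the complement of
the new support, is added back; this neither increases the norm nor is seen by the left inverse.
The limits of both sequences give the complemented copy of `C`.
-/

namespace BanachDecomposition

open Filter Topology ZeroAtInfty

variable {X Y E : Type*} [TopologicalSpace X] [TopologicalSpace Y]
  [NormedAddCommGroup E]

theorem norm_apply_le (f : C₀(X, E)) (x : X) : ‖f x‖ ≤ ‖f‖ :=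
  f.toBCF.norm_coe_le_norm x

theorem norm_le_of_forall_norm_apply_le {f : C₀(X, E)} {M : ℝ} (hM : 0 ≤ M)
    (h : ∀ x, ‖f x‖ ≤ M) : ‖f‖ ≤ M :=
  (BoundedContinuousFunction.norm_le (f := f.toBCF) hM).2 h

theorem norm_comp_le (f : C₀(X, E)) (φ : CocompactMap Y X) : ‖f.comp φ‖ ≤ ‖f‖ :=
  norm_le_of_forall_norm_apply_le (norm_nonneg f) fun y ↦ norm_apply_le f (φ y)

/-- The function on `X ⊕ Y` with prescribed restrictions to `X` and `Y`. -/
def sumElim (f : C₀(X, E)) (g : C₀(Y, E)) : C₀(X ⊕ Y, E) where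
  toFun := Sum.elim f g
  continuous_toFun := f.continuous.sumElim g.continuous
  zero_at_infty' s hs := by
    obtain ⟨K, hK, hKs⟩ := mem_cocompact.1 (f.zero_at_infty' hs)
    obtain ⟨M, hM, hMs⟩ := mem_cocompact.1 (g.zero_at_infty' hs)
    refine mem_cocompact.2
      ⟨_, (hK.image continuous_inl).union (hM.image continuous_inr), ?_⟩
    rintro (x | y) h
    · exact hKs fun hx ↦ h (.inl ⟨x, hx, rfl⟩)
    · exact hMs fun hy ↦ h (.inr ⟨y, hy, rfl⟩)

variable (X Y) in
/-- `Sum.inl` as a map along which functions vanishing at infinity can be restricted. -/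
def inlCocompact : CocompactMap X (X ⊕ Y) :=
  ⟨⟨Sum.inl, continuous_inl⟩, IsClosedEmbedding.inl.tendsto_cocompact⟩

variable (X Y) in
/-- `Sum.inr` as a map along which functions vanishing at infinity can be restricted. -/
def inrCocompact : CocompactMap Y (X ⊕ Y) :=
  ⟨⟨Sum.inr, continuous_inr⟩, IsClosedEmbedding.inr.tendsto_cocompact⟩

variable (𝕜 : Type*) [NormedField 𝕜] [NormedSpace 𝕜 E]

variable (X Y E) in
/-- Splitting `C₀(X ⊕ Y, E)` into the restrictions to `X` and `Y`. -/
def c₀SumEquivProd : C₀(X ⊕ Y, E) ≃ₗᵢ[𝕜] C₀(X, E) × C₀(Y, E) where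
  toFun f := (f.comp (inlCocompact X Y), f.comp (inrCocompact X Y))
  invFun p := sumElim p.1 p.2
  map_add' _ _ := rfl
  map_smul' _ _ := rfl
  left_inv f := by
    ext (x | y) <;> rfl
  right_inv _ := rfl
  norm_map' f := by
    refine le_antisymm (max_le (norm_comp_le f _) (norm_comp_le f _)) ?_
    refine norm_le_of_forall_norm_apply_le (norm_nonneg _) ?_
    rintro (x | y)
    · exact (norm_apply_le (f.comp (inlCocompact X Y)) x).trans (le_max_left _ _)
    · exact (norm_apply_le (f.comp (inrCocompact X Y)) y).trans (le_max_right _ _)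

variable (E) in
/-- Reindexing `C₀` along a homeomorphism. -/
def c₀DomCongr (φ : X ≃ₜ Y) : C₀(Y, E) ≃ₗᵢ[𝕜] C₀(X, E) where
  toFun f := f.comp φ.toCocompactMap
  invFun f := f.comp φ.symm.toCocompactMap
  map_add' _ _ := rfl
  map_smul' _ _ := rfl
  left_inv f := by
    ext y
    exact congrArg f (φ.apply_symm_apply y)
  right_inv f := by
    ext x
    exact congrArg f (φ.symm_apply_apply x)
  norm_map' f := by
    refine le_antisymm (norm_comp_le f _) ?_
    refine norm_le_of_forall_norm_apply_le (norm_nonneg _) fun y ↦ ?_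
    calc
      ‖f y‖ = ‖f.comp φ.toCocompactMap (φ.symm y)‖ := by simp
      _ ≤ ‖f.comp φ.toCocompactMap‖ := norm_apply_le _ _

variable (E) in
/-- Evaluation identifies `C₀` of a one-point space with the space of values. -/
def c₀UnitEquiv : C₀(Unit, E) ≃ₗᵢ[𝕜] E where
  toFun f := f ()
  invFun a := ZeroAtInftyContinuousMap.ContinuousMap.liftZeroAtInfty (.const _ a)
  map_add' _ _ := rfl
  map_smul' _ _ := rfl
  left_inv _ := rfl
  right_inv _ := rfl
  norm_map' f := le_antisymm (norm_apply_le f _)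
    (norm_le_of_forall_norm_apply_le (norm_nonneg _) fun _ ↦ le_rfl)

variable (E) in
/-- Hilbert's hotel: two sequences can be interleaved into one. -/
noncomputable def c₀NatEquivProdSelf : C₀(ℕ, E) ≃ₗᵢ[𝕜] C₀(ℕ, E) × C₀(ℕ, E) :=
  (c₀DomCongr E 𝕜 Equiv.natSumNatEquivNat.toHomeomorphOfDiscrete).trans (c₀SumEquivProd ℕ ℕ E 𝕜)

variable (E) in
/-- Splitting off the first term of a sequence. -/
noncomputable def c₀NatEquivProd : C₀(ℕ, E) ≃L[𝕜] C₀(ℕ, E) × E :=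
  ((c₀DomCongr E 𝕜 Equiv.natSumPUnitEquivNat.toHomeomorphOfDiscrete).trans
    (c₀SumEquivProd ℕ Unit E 𝕜)).toContinuousLinearEquiv.trans
      ((ContinuousLinearEquiv.refl 𝕜 _).prodCongr (c₀UnitEquiv E 𝕜).toContinuousLinearEquiv)

/-- Pełczyński's decomposition method. -/
theorem nonempty_equiv_c₀_of_retraction {𝕜 : Type*} [NormedField 𝕜] [NormedSpace 𝕜 E]
    (r : E →L[𝕜] C₀(ℕ, E)) (j : C₀(ℕ, E) →L[𝕜] E) (h : Function.RightInverse j r) :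
    Nonempty (E ≃L[𝕜] C₀(ℕ, E)) := by
  let splitting : E ≃L[𝕜] (C₀(ℕ, E) × r.ker) := .equivOfRightInverse r j h
  let absorb : (C₀(ℕ, E) × E) ≃L[𝕜] E :=
    ((ContinuousLinearEquiv.refl 𝕜 _).prodCongr splitting).trans <|
      (ContinuousLinearEquiv.prodAssoc 𝕜 _ _ _).symm.trans <|
        ((c₀NatEquivProdSelf E 𝕜).symm.toContinuousLinearEquiv.prodCongr
          (.refl 𝕜 _)).trans splitting.symm
  exact ⟨absorb.symm.trans (c₀NatEquivProd E 𝕜).symm⟩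

end BanachDecomposition

namespace AFPresentation

open Filter Topology

theorem exists_continuousLinearMap_eqOn_of_contractive {𝕜 X Y : Type*} [NontriviallyNormedField 𝕜]
    [NormedAddCommGroup X] [NormedSpace 𝕜 X] [NormedAddCommGroup Y] [NormedSpace 𝕜 Y]
    [CompleteSpace Y] {V : ℕ → Set X} (hV : Monotone V) (hdense : Dense (⋃ k, V k))
    (F : ℕ → X →ₗ[𝕜] Y) (hF : ∀ k x, ‖F k x‖ ≤ ‖x‖)
    (hstep : ∀ k, Set.EqOn (F (k + 1)) (F k) (V k)) :
    ∃ f : X →L[𝕜] Y, ∀ k, Set.EqOn f (F k) (V k) := by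
  have hstable {k l : ℕ} (hkl : k ≤ l) : Set.EqOn (F l) (F k) (V k) := by
    induction l, hkl using Nat.le_induction with
    | base => exact fun _ _ ↦ rfl
    | succ l hkl ih => exact ((hstep l).mono (hV hkl)).trans ih
  have hcauchy (x : X) : CauchySeq fun k ↦ F k x := by
    refine Metric.cauchySeq_iff'.2 fun ε hε ↦ ?_
    obtain ⟨y, hxy, hy⟩ := Metric.dense_iff.1 hdense x (ε / 2) (by positivity)
    obtain ⟨k, hk⟩ := Set.mem_iUnion.1 hy
    refine ⟨k, fun l hl ↦ ?_⟩
    calc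
      dist (F l x) (F k x) = ‖F l (x - y) - F k (x - y)‖ := by
        rw [dist_eq_norm, map_sub, map_sub, hstable hl hk, sub_sub_sub_cancel_right]
      _ ≤ ‖x - y‖ + ‖x - y‖ := (norm_sub_le _ _).trans (add_le_add (hF _ _) (hF _ _))
      _ < ε := by
        rw [mem_ball_iff_norm'] at hxy
        linarith
  choose f hf using fun x ↦ cauchySeq_tendsto_of_complete (hcauchy x)
  refine ⟨(linearMapOfTendsto f F (tendsto_pi_nhds.2 hf)).mkContinuous 1 fun x ↦ ?_,
    fun k x hx ↦ ?_⟩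
  · rw [one_mul]
    exact le_of_tendsto' (hf x).norm fun k ↦ hF k x
  · exact tendsto_nhds_unique (hf x) <| tendsto_atTop_of_eventually_const fun l hl ↦ hstable hl hx

/-- `e` is a minimal projection of the *-subalgebra `D`: a nonzero projection of `D` whose corner
`e * D * e` consists of the scalar multiples of `e`. -/
structure IsMinimalProjection {A : Type*} [NonUnitalCStarAlgebra A]
    (D : NonUnitalStarSubalgebra ℂ A) (e : A) : Prop where
  mem : e ∈ D
  isStarProjection : IsStarProjection e
  ne_zero : e ≠ 0
  exists_smul_eq : ∀ a ∈ D, ∃ c : ℂ, e * a * e = c • e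

section FiniteDimensional

theorem finite_spectrum {K B : Type*} [Field K] [IsAlgClosed K] [Ring B] [Algebra K B]
    [FiniteDimensional K B] (b : B) : (spectrum K b).Finite := by
  nontriviality B
  refine (Polynomial.rootSet_finite (minpoly K b) K).subset fun c hc ↦ ?_
  have hroot := spectrum.subset_polynomial_aeval b (minpoly K b) ⟨c, hc, rfl⟩
  rw [minpoly.aeval, spectrum.zero_eq, Set.mem_singleton_iff] at hroot
  exact (Polynomial.mem_rootSet_of_ne (minpoly.ne_zero_of_finite K b)).2 (by simpa using hroot)

variable {E : Type*} [NonUnitalCStarAlgebra E] [FiniteDimensional ℂ E]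

theorem finite_quasispectrum (x : E) : (quasispectrum ℂ x).Finite := by
  have : FiniteDimensional ℂ (Unitization ℂ E) :=
    (Unitization.linearEquiv ℂ ℂ E).symm.finiteDimensional
  rw [Unitization.quasispectrum_eq_spectrum_inr' ℂ ℂ x]
  exact finite_spectrum _

theorem exists_spectral_projection {x : E} [IsStarNormal x] (hx : x ≠ 0) :
    ∃ c : ℂ, c ≠ 0 ∧ ∃ e : E, IsStarProjection e ∧ e ≠ 0 ∧ x * e = c • e := by
  have hcont (f : ℂ → ℂ) : ContinuousOn f (quasispectrum ℂ x) :=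
    (finite_quasispectrum x).continuousOn f
  obtain ⟨c, hc, hc0⟩ : ∃ c ∈ quasispectrum ℂ x, c ≠ 0 := by
    by_contra! h
    exact hx (CFC.eq_zero_of_quasispectrum_eq_zero (R := ℂ) x h)
  let χ : ℂ → ℂ := fun z ↦ if z = c then 1 else 0
  have hχ0 : χ 0 = 0 := if_neg hc0.symm
  refine ⟨c, hc0, cfcₙ χ x, ⟨?_, ?_⟩, fun h ↦ ?_, ?_⟩
  · rw [IsIdempotentElem, ← cfcₙ_mul χ χ x (hcont _) hχ0 (hcont _) hχ0]
    exact cfcₙ_congr fun z _ ↦ by simp [χ]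
  · rw [IsSelfAdjoint, ← cfcₙ_star]
    exact cfcₙ_congr fun z _ ↦ by simp [χ, apply_ite]
  · rw [← cfcₙ_zero ℂ x,
      cfcₙ_eq_cfcₙ_iff_eqOn (hf := hcont _) (hf0 := hχ0) (hg := hcont _)] at h
    simpa [χ] using h hc
  · nth_rw 1 [← cfcₙ_id ℂ x]
    rw [← cfcₙ_mul _ _ x (hcont _) rfl (hcont _) hχ0, ← cfcₙ_const_mul c χ x (hcont _) hχ0]
    refine cfcₙ_congr fun z _ ↦ ?_
    by_cases hz : z = c <;> simp [χ, hz]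

/-- Among the eigenprojections `e` of `x`, take one with `e * E` of least dimension. -/
theorem exists_spectral_projection_without_subprojection {x : E} [IsStarNormal x] (hx : x ≠ 0) :
    ∃ c : ℂ, c ≠ 0 ∧ ∃ f : E, IsStarProjection f ∧ f ≠ 0 ∧ x * f = c • f ∧
      ∀ e, IsStarProjection e → e ≠ 0 → f * e = e → e = f := by
  let IsEigenprojection (e : E) : Prop :=
    (IsStarProjection e ∧ e ≠ 0) ∧ ∃ c : ℂ, c ≠ 0 ∧ x * e = c • e
  have hne : ∃ e, IsEigenprojection e := by
    obtain ⟨c, hc, e, he, he0, hxe⟩ := exists_spectral_projection hx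
    exact ⟨e, ⟨he, he0⟩, c, hc, hxe⟩
  obtain ⟨f, ⟨⟨hf, hf0⟩, c, hc, hxf⟩, hmin⟩ :=
    exists_minimalFor_of_wellFoundedLT IsEigenprojection
      (fun e ↦ Module.finrank ℂ (LinearMap.mulLeft ℂ e).range) hne
  refine ⟨c, hc, f, hf, hf0, hxf, fun e he he0 hfe ↦ ?_⟩
  have hle : (LinearMap.mulLeft ℂ e).range ≤ (LinearMap.mulLeft ℂ f).range := by
    rintro _ ⟨a, rfl⟩
    exact ⟨e * a, by simp [← mul_assoc, hfe]⟩
  have hxe : x * e = c • e := by rw [← hfe, ← mul_assoc, hxf, smul_mul_assoc]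
  have hrange := Submodule.eq_of_le_of_finrank_le hle
    (hmin ⟨⟨he, he0⟩, c, hc, hxe⟩ (Submodule.finrank_mono hle))
  obtain ⟨a, ha⟩ : f ∈ (LinearMap.mulLeft ℂ e).range := by
    rw [hrange]
    exact ⟨f, hf.isIdempotentElem⟩
  have hef : e * f = f := by
    rw [← ha, LinearMap.mulLeft_apply, ← mul_assoc, he.isIdempotentElem]
  simpa [he.isSelfAdjoint.star_eq, hf.isSelfAdjoint.star_eq, hef] using (congrArg star hfe).symm

theorem isMinimalProjection_top_of_forall_subprojection_eq {f : E} (hf : IsStarProjection f)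
    (hf0 : f ≠ 0) (hsub : ∀ e, IsStarProjection e → e ≠ 0 → f * e = e → e = f) :
    IsMinimalProjection (⊤ : NonUnitalStarSubalgebra ℂ E) f := by
  have hself {a : E} (ha : IsSelfAdjoint a) : ∃ d : ℂ, f * a * f = d • f := by
    by_cases hb0 : f * a * f = 0
    · exact ⟨0, by rw [hb0, zero_smul]⟩
    have hb : IsSelfAdjoint (f * a * f) := by
      simpa only [hf.isSelfAdjoint.star_eq] using ha.conjugate f
    have := hb.isStarNormal
    obtain ⟨d, hd, e, he, he0, hde⟩ := exists_spectral_projection hb0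
    have hfe : f * e = e := by
      refine smul_right_injective E hd ?_
      simp only [← mul_smul_comm, ← hde, ← mul_assoc, hf.isIdempotentElem.eq]
    obtain rfl := hsub e he he0 hfe
    exact ⟨d, by rw [← hde, mul_assoc (_ * a), he.isIdempotentElem.eq]⟩
  refine ⟨trivial, hf, hf0, fun a _ ↦ ?_⟩
  obtain ⟨d₁, hd₁⟩ := hself (realPart a).2
  obtain ⟨d₂, hd₂⟩ := hself (imaginaryPart a).2
  refine ⟨d₁ + Complex.I * d₂, ?_⟩
  nth_rw 1 [← realPart_add_I_smul_imaginaryPart a]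
  simp only [mul_add, add_mul, mul_smul_comm, smul_mul_assoc, hd₁, hd₂, add_smul, mul_smul]

end FiniteDimensional

section Frames

variable {A : Type*} [NonUnitalCStarAlgebra A] {D : NonUnitalStarSubalgebra ℂ A}

theorem exists_isMinimalProjection_mul_eq_smul [FiniteDimensional ℂ D] {x : A} (hxD : x ∈ D)
    (hx : IsSelfAdjoint x) (hx0 : x ≠ 0) :
    ∃ c : ℂ, c ≠ 0 ∧ ∃ f, IsMinimalProjection D f ∧ x * f = c • f := by
  have : IsClosed (D : Set A) := Submodule.closed_of_finiteDimensional D.toSubmodule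
  have : IsStarNormal (⟨x, hxD⟩ : D) := IsSelfAdjoint.isStarNormal (Subtype.ext hx)
  have hx0' : (⟨x, hxD⟩ : D) ≠ 0 := fun h ↦ hx0 (congrArg Subtype.val h)
  obtain ⟨c, hc, f, hf, hf0, hxf, hsub⟩ := exists_spectral_projection_without_subprojection hx0'
  obtain ⟨-, -, -, hscalar⟩ := isMinimalProjection_top_of_forall_subprojection_eq hf hf0 hsub
  refine ⟨c, hc, f, ⟨f.2, ?_, ?_, fun a ha ↦ ?_⟩, congrArg Subtype.val hxf⟩
  · exact ⟨congrArg Subtype.val hf.isIdempotentElem.eq,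
      congrArg Subtype.val hf.isSelfAdjoint.star_eq⟩
  · exact fun h ↦ hf0 (Subtype.ext h)
  · obtain ⟨d, hd⟩ := hscalar ⟨a, ha⟩ trivial
    exact ⟨d, congrArg Subtype.val hd⟩

theorem mul_eq_self_of_star_mul_self_eq {g y : A} (hg : IsStarProjection g)
    (h : star y * y = g) : y * g = y := by
  have hzero : star (y * g - y) * (y * g - y) = 0 := by
    simp only [star_sub, star_mul, hg.isSelfAdjoint.star_eq, sub_mul, mul_sub, mul_assoc]
    simp only [← mul_assoc, h, hg.isIdempotentElem.eq, sub_self]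
  exact sub_eq_zero.1 ((CStarRing.star_mul_self_eq_zero_iff _).1 hzero)

theorem exists_pos_of_star_mul_self_eq_smul {g y : A} {c : ℂ} (hg : IsStarProjection g)
    (hy : y ≠ 0) (h : star y * y = c • g) : ∃ r : ℝ, 0 < r ∧ star y * y = r • g := by
  have hyy : star y * y ≠ 0 := (CStarRing.star_mul_self_eq_zero_iff y).not.2 hy
  have hg0 : g ≠ 0 := by
    rintro rfl
    exact hyy (by rw [h, smul_zero])
  obtain ⟨r, rfl⟩ : ∃ r : ℝ, (r : ℂ) = c := by
    have hstar : star c • g = c • g := by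
      rw [← h, ← (IsSelfAdjoint.star_mul_self y).star_eq, h, star_smul, hg.isSelfAdjoint.star_eq]
    exact (Complex.conj_eq_iff_real.1 (smul_left_injective ℂ hg0 hstar)).imp fun _ ↦ Eq.symm
  rw [Complex.coe_smul] at h
  let _ := CStarAlgebra.spectralOrder A
  let _ := CStarAlgebra.spectralOrderedRing A
  refine ⟨r, lt_of_not_ge fun hr ↦ hyy (le_antisymm ?_ (star_mul_self_nonneg y)), h⟩
  rw [h]
  exact smul_nonpos_of_nonpos_of_nonneg hr hg.nonneg

theorem exists_smul_star_mul_self_eq {g y : A} {c : ℂ} (hg : IsStarProjection g)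
    (hy : y ≠ 0) (h : star y * y = c • g) :
    ∃ d : ℂ, d ≠ 0 ∧ star (d • y) * (d • y) = g := by
  obtain ⟨r, hr, hyr⟩ := exists_pos_of_star_mul_self_eq_smul hg hy h
  refine ⟨((√r)⁻¹ : ℝ), by simpa using (Real.sqrt_pos.2 hr).ne', ?_⟩
  simp only [Complex.coe_smul, star_smul, star_trivial, smul_mul_smul_comm, hyr, smul_smul]
  rw [← mul_inv, Real.mul_self_sqrt hr.le, inv_mul_cancel₀ hr.ne', one_smul]

namespace IsMinimalProjection

variable {e : A} (he : IsMinimalProjection D e)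
include he

theorem exists_star_mul_eq_smul {y z : A} (hy : y ∈ D) (hz : z ∈ D) (hye : y * e = y)
    (hze : z * e = z) : ∃ c : ℂ, star y * z = c • e := by
  obtain ⟨c, hc⟩ := he.exists_smul_eq (star y * z) (mul_mem (star_mem hy) hz)
  have hey : e * star y = star y := by
    simpa only [star_mul, he.isStarProjection.isSelfAdjoint.star_eq] using congrArg star hye
  exact ⟨c, by rw [← hc, ← mul_assoc, hey, mul_assoc, hze]⟩

theorem exists_smul_partialIsometry {y : A} (hy : y ∈ D) (hye : y * e = y) (hy0 : y ≠ 0) :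
    ∃ d : ℂ, star (d • y) * (d • y) = e := by
  obtain ⟨c, hc⟩ := he.exists_star_mul_eq_smul hy hy hye hye
  obtain ⟨d, -, hd⟩ := exists_smul_star_mul_self_eq he.isStarProjection hy0 hc
  exact ⟨d, hd⟩

end IsMinimalProjection

/-- A set of representatives of the minimal projections of `D` up to connectedness through `D`,
that is, one minimal projection for each simple summand of `D`. -/
structure IsSourceSystem (D : NonUnitalStarSubalgebra ℂ A) (R : Set A) : Prop where
  isMinimalProjection : ∀ e ∈ R, IsMinimalProjection D e
  pairwise_disconnected : R.Pairwise fun e f ↦ ∀ a ∈ D, e * a * f = 0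
  exists_connected : ∀ e, IsMinimalProjection D e → ∃ f ∈ R, ∃ a ∈ D, e * a * f ≠ 0

variable (D) in
theorem exists_isSourceSystem : ∃ R, IsSourceSystem D R := by
  let Disconnected (e f : A) : Prop := ∀ a ∈ D, e * a * f = 0
  let families : Set (Set A) :=
    {R | (∀ e ∈ R, IsMinimalProjection D e) ∧ R.Pairwise Disconnected}
  obtain ⟨R, hR⟩ := zorn_subset families fun C hC hchain ↦
    ⟨⋃₀ C, ⟨fun e ⟨S, hS, heS⟩ ↦ (hC hS).1 e heS,
      (Set.pairwise_sUnion hchain.directedOn).2 fun S hS ↦ (hC hS).2⟩,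
      fun S hS ↦ Set.subset_sUnion_of_mem hS⟩
  refine ⟨R, hR.prop.1, hR.prop.2, fun e he ↦ ?_⟩
  by_contra! hdisc
  have hsymm : ∀ f ∈ R, ∀ a ∈ D, f * a * e = 0 := fun f hf a ha ↦ by
    have := congrArg star (hdisc f hf (star a) (star_mem ha))
    simpa only [star_mul, star_star, (hR.prop.1 f hf).isStarProjection.isSelfAdjoint.star_eq,
      he.isStarProjection.isSelfAdjoint.star_eq, star_zero, mul_assoc] using this
  have hinsert : insert e R ∈ families :=
    ⟨Set.forall_mem_insert.2 ⟨he, hR.prop.1⟩,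
      hR.prop.2.insert fun f hf _ ↦ ⟨hdisc f hf, hsymm f hf⟩⟩
  have heR : e ∈ R := hR.le_of_ge hinsert (Set.subset_insert e R) (Set.mem_insert e R)
  refine he.ne_zero ?_
  rw [← hdisc e heR e he.mem, he.isStarProjection.isIdempotentElem,
    he.isStarProjection.isIdempotentElem]

/-- A finite set of partial isometries of `D` whose ranges are pairwise orthogonal and whose
sources lie in `R`. -/
structure IsFrame (D : NonUnitalStarSubalgebra ℂ A) (R : Set A) (F : Finset A) : Prop where
  mem : ∀ u ∈ F, u ∈ D
  source_mem : ∀ u ∈ F, star u * u ∈ R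
  star_mul_eq_zero : ∀ u ∈ F, ∀ v ∈ F, u ≠ v → star u * v = 0

variable {R : Set A} {F : Finset A}

namespace IsFrame

theorem insert [DecidableEq A] (hF : IsFrame D R F) {u : A} (huD : u ∈ D) (huR : star u * u ∈ R)
    (horth : ∀ v ∈ F, star v * u = 0) : IsFrame D R (insert u F) where
  mem := (Finset.forall_mem_insert _ _ _).2 ⟨huD, hF.mem⟩
  source_mem := (Finset.forall_mem_insert _ _ _).2 ⟨huR, hF.source_mem⟩
  star_mul_eq_zero := by
    have horth' : ∀ v ∈ F, star u * v = 0 := fun v hv ↦ by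
      simpa only [star_mul, star_star, star_zero] using congrArg star (horth v hv)
    simp only [Finset.forall_mem_insert]
    exact ⟨⟨fun h ↦ absurd rfl h, fun v hv _ ↦ horth' v hv⟩,
      fun v hv ↦ ⟨fun _ ↦ horth v hv, hF.star_mul_eq_zero v hv⟩⟩

variable (hR : IsSourceSystem D R) (hF : IsFrame D R F)
include hF hR

theorem mul_source {u : A} (hu : u ∈ F) : u * (star u * u) = u :=
  mul_eq_self_of_star_mul_self_eq
    (hR.isMinimalProjection _ (hF.source_mem u hu)).isStarProjection rfl

theorem sum_mul_self {G : Finset A} (hGF : G ⊆ F) {u : A} (hu : u ∈ G) :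
    (∑ v ∈ G, v * star v) * u = u := by
  rw [Finset.sum_mul, Finset.sum_eq_single_of_mem u hu fun v hv hvu ↦ ?_, mul_assoc,
    hF.mul_source hR (hGF hu)]
  rw [mul_assoc, hF.star_mul_eq_zero v (hGF hv) u (hGF hu) hvu, mul_zero]

theorem isStarProjection_sum {G : Finset A} (hGF : G ⊆ F) :
    IsStarProjection (∑ v ∈ G, v * star v) where
  isIdempotentElem := by
    rw [IsIdempotentElem, Finset.mul_sum]
    exact Finset.sum_congr rfl fun u hu ↦ by rw [← mul_assoc, hF.sum_mul_self hR hGF hu]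
  isSelfAdjoint := isSelfAdjoint_sum _ fun u _ ↦ .mul_star_self u

theorem linearIndependent : LinearIndependent ℂ ((↑) : F → A) := by
  refine Fintype.linearIndependent_iff.2 fun c hc u ↦ ?_
  have hcu : c u • (star (u : A) * u) = 0 := by
    rw [← mul_zero (star (u : A)), ← hc, Finset.mul_sum,
      Finset.sum_eq_single u (fun v _ hvu ↦ ?_) (by simp), mul_smul_comm]
    rw [mul_smul_comm, hF.star_mul_eq_zero u u.2 v v.2 (Subtype.coe_ne_coe.2 hvu.symm), smul_zero]
  exact (smul_eq_zero.1 hcu).resolve_right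
    (hR.isMinimalProjection _ (hF.source_mem u u.2)).ne_zero

theorem card_le_finrank [FiniteDimensional ℂ D] : F.card ≤ Module.finrank ℂ D := by
  have hli : LinearIndependent ℂ fun u : F ↦ (⟨u, hF.mem u u.2⟩ : D) :=
    .of_comp D.toSubmodule.subtype (hF.linearIndependent hR)
  simpa using hli.fintype_card_le_finrank

end IsFrame

namespace IsSourceSystem

variable [FiniteDimensional ℂ D] (hR : IsSourceSystem D R)
include hR

theorem exists_partialIsometry {g : A} (hgD : g ∈ D) (hg : IsStarProjection g) (hg0 : g ≠ 0) :
    ∃ u ∈ D, star u * u ∈ R ∧ g * u = u := by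
  obtain ⟨c, hc, f, hf, hgf⟩ := exists_isMinimalProjection_mul_eq_smul hgD hg.isSelfAdjoint hg0
  have hgf' : g * f = f := by
    have : c • (g * f) = c • f := by
      rw [← hgf, ← mul_smul_comm, ← hgf, ← mul_assoc, hg.isIdempotentElem.eq]
    exact smul_right_injective A hc this
  obtain ⟨r, hr, a, ha, hne⟩ := hR.exists_connected f hf
  have hr' := hR.isMinimalProjection r hr
  have hmem : f * a * r ∈ D := mul_mem (mul_mem hf.mem ha) hr'.mem
  obtain ⟨d, hd⟩ := hr'.exists_smul_partialIsometry hmem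
    (by rw [mul_assoc, hr'.isStarProjection.isIdempotentElem.eq]) hne
  refine ⟨d • (f * a * r), SMulMemClass.smul_mem d hmem, hd.symm ▸ hr, ?_⟩
  rw [mul_smul_comm, ← mul_assoc, ← mul_assoc, hgf']

theorem exists_isFrame_card_lt {g : A} (hgD : g ∈ D) (hg : IsStarProjection g)
    (hF : IsFrame D R F) (hgF : ∀ u ∈ F, g * u = u) (hsum : ∑ u ∈ F, u * star u ≠ g) :
    ∃ F', IsFrame D R F' ∧ (∀ u ∈ F', g * u = u) ∧ F.card < F'.card := by
  classical
  let s := ∑ u ∈ F, u * star u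
  have hs : IsStarProjection s := hF.isStarProjection_sum hR subset_rfl
  have hsD : s ∈ D := sum_mem fun u hu ↦ mul_mem (hF.mem u hu) (star_mem (hF.mem u hu))
  have hgs : g * s = s := by
    rw [Finset.mul_sum]
    exact Finset.sum_congr rfl fun u hu ↦ by rw [← mul_assoc, hgF u hu]
  have hgs' : IsStarProjection (g - s) := hs.sub_of_mul_eq_right hg hgs
  obtain ⟨u, huD, huR, hu⟩ := hR.exists_partialIsometry (sub_mem hgD hsD) hgs'
    (sub_ne_zero.2 hsum.symm)
  have horth : ∀ v ∈ F, star v * u = 0 := fun v hv ↦ by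
    have hv0 : star v * (g - s) = 0 := by
      rw [← star_eq_zero, star_mul, star_star, hgs'.isSelfAdjoint.star_eq, sub_mul, hgF v hv,
        hF.sum_mul_self hR subset_rfl hv, sub_self]
    rw [← hu, ← mul_assoc, hv0, zero_mul]
  have huF : u ∉ F := fun h ↦ (hR.isMinimalProjection _ huR).ne_zero (horth u h)
  have hgu : g * u = u := by
    rw [← hu, ← mul_assoc, mul_sub, hg.isIdempotentElem.eq, hgs]
  refine ⟨insert u F, hF.insert huD huR horth, (Finset.forall_mem_insert _ _ _).2 ⟨hgu, hgF⟩, ?_⟩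
  rw [Finset.card_insert_of_notMem huF]
  exact Nat.lt_succ_self _

theorem exists_isFrame {g : A} (hgD : g ∈ D) (hg : IsStarProjection g) :
    ∃ F, IsFrame D R F ∧ ∑ u ∈ F, u * star u = g := by
  let frames : Set (Finset A) := {F | IsFrame D R F ∧ ∀ u ∈ F, g * u = u}
  have hbdd : BddAbove (Finset.card '' frames) :=
    ⟨_, Set.forall_mem_image.2 fun F hF ↦ hF.1.card_le_finrank hR⟩
  have hne : (Finset.card '' frames).Nonempty := .image _ ⟨∅, by constructor <;> simp, by simp⟩
  obtain ⟨F, ⟨hF, hgF⟩, hcard⟩ := Nat.sSup_mem hne hbdd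
  refine ⟨F, hF, ?_⟩
  by_contra hsum
  obtain ⟨F', hF', hgF', hlt⟩ := hR.exists_isFrame_card_lt hgD hg hF hgF hsum
  exact (hcard ▸ le_csSup hbdd (Set.mem_image_of_mem _ ⟨hF', hgF'⟩)).not_gt hlt

end IsSourceSystem

theorem IsSourceSystem.star_mul_mul_eq_zero (hR : IsSourceSystem D R) {u v : A} (hu : u ∈ D)
    (hv : v ∈ D) (huR : star u * u ∈ R) (hvR : star v * v ∈ R) (huv : star u * u ≠ star v * v)
    {a : A} (ha : a ∈ D) : star u * a * v = 0 := by
  have hu' : star u * u * star u = star u := by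
    simpa only [star_mul, star_star] using congrArg star
      (mul_eq_self_of_star_mul_self_eq (hR.isMinimalProjection _ huR).isStarProjection rfl)
  have hv' : v * (star v * v) = v :=
    mul_eq_self_of_star_mul_self_eq (hR.isMinimalProjection _ hvR).isStarProjection rfl
  rw [← hu', ← hv']
  simpa only [mul_assoc] using hR.pairwise_disconnected huR hvR huv (star u * a * v)
    (mul_mem (mul_mem (star_mem hu) ha) hv)

theorem IsSourceSystem.pairwise_star_mul_eq_zero_sigma (hR : IsSourceSystem D R) {ι : Type*}
    {F : ι → Finset A} (hF : ∀ i, IsFrame D R (F i))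
    (horth : Pairwise fun i j ↦ (∑ u ∈ F i, u * star u) * ∑ u ∈ F j, u * star u = 0) :
    Pairwise fun α β : Σ i, F i ↦ star (α.2 : A) * β.2 = 0 := by
  rintro ⟨i, u, hu⟩ ⟨j, v, hv⟩ h
  change star u * v = 0
  obtain rfl | hij := eq_or_ne i j
  · exact (hF i).star_mul_eq_zero u hu v hv fun huv ↦ h (by subst huv; rfl)
  · rw [← (hF i).sum_mul_self hR subset_rfl hu, ← (hF j).sum_mul_self hR subset_rfl hv, star_mul,
      ((hF i).isStarProjection_sum hR subset_rfl).isSelfAdjoint.star_eq, mul_assoc,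
      ← mul_assoc (∑ u ∈ F i, u * star u), horth hij, zero_mul, mul_zero]

/-- Minimality among the projections of the centre of `D`. -/
structure IsMinimalCentralProjection (D : NonUnitalStarSubalgebra ℂ A) (p : A) : Prop where
  mem : p ∈ D
  isStarProjection : IsStarProjection p
  ne_zero : p ≠ 0
  commute : ∀ a ∈ D, Commute p a
  eq_of_le : ∀ z ∈ D, IsStarProjection z → (∀ a ∈ D, Commute z a) → z * p = z → z ≠ 0 → z = p

namespace IsFrame

variable (hR : IsSourceSystem D R) (hF : IsFrame D R F)
include hF hR

theorem commute_sum_filter_source [DecidableEq A]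
    (hcomm : ∀ a ∈ D, Commute (∑ u ∈ F, u * star u) a) (r : A) {a : A} (ha : a ∈ D) :
    Commute (∑ u ∈ F with star u * u = r, u * star u) a := by
  let z := ∑ u ∈ F with star u * u = r, u * star u
  have hsub : {u ∈ F | star u * u = r} ⊆ F := Finset.filter_subset _ _
  have hz : IsStarProjection z := hF.isStarProjection_sum hR hsub
  have hzp : (∑ u ∈ F, u * star u) * z = z := by
    rw [Finset.mul_sum]
    exact Finset.sum_congr rfl fun u hu ↦ by
      rw [← mul_assoc, hF.sum_mul_self hR subset_rfl (hsub hu)]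
  have hcorner : ∀ a ∈ D, z * a = z * a * z := fun a ha ↦ by
    have hzD : z ∈ D := sum_mem fun u hu ↦
      mul_mem (hF.mem u (hsub hu)) (star_mem (hF.mem u (hsub hu)))
    nth_rewrite 1 [← hzp]
    rw [mul_assoc, (hcomm _ (mul_mem hzD ha)).eq, Finset.mul_sum, Finset.mul_sum]
    refine (Finset.sum_subset hsub fun v hv hvr ↦ ?_).symm
    rw [← mul_assoc, Finset.sum_mul, Finset.sum_mul, Finset.sum_eq_zero fun u hu ↦ ?_, zero_mul]
    have huv : star u * u ≠ star v * v := fun h ↦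
      hvr (Finset.mem_filter.2 ⟨hv, h ▸ (Finset.mem_filter.1 hu).2⟩)
    rw [mul_assoc, mul_assoc, ← mul_assoc (star u),
      hR.star_mul_mul_eq_zero (hF.mem u (hsub hu)) (hF.mem v hv) (hF.source_mem u (hsub hu))
        (hF.source_mem v hv) huv ha, mul_zero]
  have hcorner' := congrArg star (hcorner (star a) (star_mem ha))
  simp only [star_mul, star_star, hz.isSelfAdjoint.star_eq] at hcorner'
  rw [Commute, SemiconjBy, hcorner a ha, hcorner', mul_assoc]

theorem sum_filter_source_eq [DecidableEq A] {p : A} (hp : IsMinimalCentralProjection D p)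
    (hsum : ∑ u ∈ F, u * star u = p) {u₀ : A} (hu₀ : u₀ ∈ F) :
    ∑ u ∈ F with star u * u = star u₀ * u₀, u * star u = p := by
  have hsub : {u ∈ F | star u * u = star u₀ * u₀} ⊆ F := Finset.filter_subset _ _
  have hzD : ∑ u ∈ F with star u * u = star u₀ * u₀, u * star u ∈ D := sum_mem fun u hu ↦
    mul_mem (hF.mem u (hsub hu)) (star_mem (hF.mem u (hsub hu)))
  refine hp.eq_of_le _ hzD (hF.isStarProjection_sum hR hsub)
    (fun a ha ↦ hF.commute_sum_filter_source hR (hsum ▸ hp.commute) _ ha) ?_ fun hz0 ↦ ?_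
  · rw [← (hp.commute _ hzD).eq, Finset.mul_sum, ← hsum]
    exact Finset.sum_congr rfl fun u hu ↦ by
      rw [← mul_assoc, hF.sum_mul_self hR subset_rfl (hsub hu)]
  · refine (hR.isMinimalProjection _ (hF.source_mem u₀ hu₀)).ne_zero ?_
    have hzu₀ := hF.sum_mul_self hR hsub (Finset.mem_filter.2 ⟨hu₀, rfl⟩)
    rw [← hzu₀, hz0, zero_mul, mul_zero]

end IsFrame

-- Splitting `p` along a frame by source gives central projections, so all sources coincide.
theorem IsMinimalCentralProjection.exists_common_source [FiniteDimensional ℂ D] {p : A}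
    (hp : IsMinimalCentralProjection D p) : ∃ r, IsMinimalProjection D r ∧ r * p = r ∧
      ∀ q ∈ D, IsStarProjection q → q * p = q → q ≠ 0 →
        ∃ w ∈ D, q * w = w ∧ star w * w = r := by
  classical
  obtain ⟨R, hR⟩ := exists_isSourceSystem D
  obtain ⟨F, hF, hsum⟩ := hR.exists_isFrame hp.mem hp.isStarProjection
  obtain ⟨u₀, hu₀⟩ : F.Nonempty := Finset.nonempty_iff_ne_empty.2 fun h ↦
    hp.ne_zero (by rw [← hsum, h, Finset.sum_empty])
  have hr := hR.isMinimalProjection _ (hF.source_mem u₀ hu₀)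
  refine ⟨star u₀ * u₀, hr, ?_, fun q hqD hq hqp hq0 ↦ ?_⟩
  · rw [mul_assoc, ← (hp.commute u₀ (hF.mem u₀ hu₀)).eq, ← hsum, hF.sum_mul_self hR subset_rfl hu₀]
  obtain ⟨u, hu, hqu⟩ : ∃ u ∈ {u ∈ F | star u * u = star u₀ * u₀}, q * u ≠ 0 := by
    by_contra! h
    refine hq0 ?_
    rw [← hqp, ← hF.sum_filter_source_eq hR hp hsum hu₀, Finset.mul_sum]
    exact Finset.sum_eq_zero fun u hu ↦ by rw [← mul_assoc, h u hu, zero_mul]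
  obtain ⟨huF, hu⟩ := Finset.mem_filter.1 hu
  have hquD := mul_mem hqD (hF.mem u huF)
  obtain ⟨d, hd⟩ := hr.exists_smul_partialIsometry hquD
    (by rw [mul_assoc, ← hu, hF.mul_source hR huF]) hqu
  exact ⟨d • (q * u), SMulMemClass.smul_mem d hquD,
    by rw [mul_smul_comm, ← mul_assoc, hq.isIdempotentElem.eq], hd⟩

end Frames

section Branching

variable {A : Type*} [NonUnitalCStarAlgebra A]

/-- Partial isometries `w a ∈ D` with common source `e'` whose ranges are pairwise orthogonal
subprojections of `e`. -/
structure IsIsometryFamily {ι : Type*} (D : NonUnitalStarSubalgebra ℂ A) (e e' : A)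
    (w : ι → A) : Prop where
  mem : ∀ a, w a ∈ D
  mul_eq : ∀ a, e * w a = w a
  star_mul_self_eq : ∀ a, star (w a) * w a = e'
  star_mul_eq_zero : Pairwise fun a b ↦ star (w a) * w b = 0

namespace IsIsometryFamily

variable {ι κ : Type*} {D D' : NonUnitalStarSubalgebra ℂ A} {e e' e'' : A} {w : ι → A}

theorem comp (hw : IsIsometryFamily D e e' w) {f : κ → ι} (hf : f.Injective) :
    IsIsometryFamily D e e' (w ∘ f) where
  mem a := hw.mem (f a)
  mul_eq a := hw.mul_eq (f a)
  star_mul_self_eq a := hw.star_mul_self_eq (f a)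
  star_mul_eq_zero _ _ hab := hw.star_mul_eq_zero (hf.ne hab)

theorem prod (hD : D ≤ D') (hw : IsIsometryFamily D e e' w) {y : κ → A}
    (hy : IsIsometryFamily D' e' e'' y) :
    IsIsometryFamily D' e e'' fun x : ι × κ ↦ w x.1 * y x.2 := by
  have hmul (x x' : ι × κ) : star (w x.1 * y x.2) * (w x'.1 * y x'.2) =
      star (y x.2) * (star (w x.1) * w x'.1 * y x'.2) := by
    simp only [star_mul, mul_assoc]
  refine ⟨fun x ↦ mul_mem (hD (hw.mem x.1)) (hy.mem x.2),
    fun x ↦ by rw [← mul_assoc, hw.mul_eq], fun x ↦ ?_, fun x x' hx ↦ ?_⟩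
  · rw [hmul, hw.star_mul_self_eq, hy.mul_eq, hy.star_mul_self_eq]
  · change star (w x.1 * y x.2) * (w x'.1 * y x'.2) = 0
    rw [hmul]
    obtain h | h := eq_or_ne x.1 x'.1
    · rw [h, hw.star_mul_self_eq, hy.mul_eq, hy.star_mul_eq_zero fun h' ↦ hx (Prod.ext h h')]
    · rw [hw.star_mul_eq_zero h, zero_mul, mul_zero]

end IsIsometryFamily

/-- Minimal projections `P k` of the algebras `B k`, each of which contains two orthogonal copies
of some member of `P (k + 1)`. This is the form in which the Fermion property is used. -/
structure IsBranchingSystem (B : ℕ → NonUnitalStarSubalgebra ℂ A) (P : ℕ → Set A) : Prop where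
  monotone : Monotone B
  isMinimalProjection : ∀ k, ∀ e ∈ P k, IsMinimalProjection (B k) e
  nonempty : (P 0).Nonempty
  exists_isIsometryFamily : ∀ k, ∀ e ∈ P k, ∃ e' ∈ P (k + 1), ∃ w : Bool → A,
    IsIsometryFamily (B (k + 1)) e e' w

namespace IsBranchingSystem

variable {B : ℕ → NonUnitalStarSubalgebra ℂ A} {P : ℕ → Set A} (hBP : IsBranchingSystem B P)
include hBP

theorem exists_isIsometryFamily_pi_bool (n k : ℕ) : ∀ e ∈ P k, ∃ k' > k, ∃ e' ∈ P k',
    ∃ w : (Fin n → Bool) → A, IsIsometryFamily (B k') e e' w := by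
  induction n generalizing k with
  | zero =>
    intro e he
    obtain ⟨e', he', w, hw⟩ := hBP.exists_isIsometryFamily k e he
    exact ⟨k + 1, k.lt_succ_self, e', he', _, hw.comp (f := fun _ ↦ true)
      (Function.injective_of_subsingleton _)⟩
  | succ n ih =>
    intro e he
    obtain ⟨e₁, he₁, w, hw⟩ := hBP.exists_isIsometryFamily k e he
    obtain ⟨k', hk', e', he', y, hy⟩ := ih (k + 1) e₁ he₁
    exact ⟨k', by omega, e', he', _, (hw.prod (hBP.monotone hk'.le) hy).comp
      (Fin.consEquiv fun _ ↦ Bool).symm.injective⟩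

theorem exists_isIsometryFamily_of_finite (ι : Type*) [Finite ι] {k : ℕ} {e : A} (he : e ∈ P k) :
    ∃ k' > k, ∃ e' ∈ P k', ∃ w : ι → A, IsIsometryFamily (B k') e e' w := by
  obtain ⟨n, ⟨f⟩⟩ := Finite.exists_equiv_fin ι
  obtain ⟨k', hk', e', he', w, hw⟩ := hBP.exists_isIsometryFamily_pi_bool n k e he
  have hinj : (fun (i : ι) (j : Fin n) ↦ decide (f i = j)).Injective := fun i j hij ↦
    f.injective (by simpa using congrFun hij (f j))
  exact ⟨k', hk', e', he', _, hw.comp hinj⟩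

end IsBranchingSystem

theorem IsMinimalCentralProjection.exists_isIsometryFamily_bool
    {D : NonUnitalStarSubalgebra ℂ A} [FiniteDimensional ℂ D] {p : A}
    (hp : IsMinimalCentralProjection D p) {e q : A} (he : e ∈ D) (heproj : IsStarProjection e)
    (hq : q ∈ D) (hqproj : IsStarProjection q) (hq0 : q ≠ 0) (hqe : q * (p * e) = q)
    (hne : q ≠ p * e) : ∃ r, IsMinimalProjection D r ∧ r * p = r ∧
      ∃ w : Bool → A, IsIsometryFamily D e r w := by
  obtain ⟨r, hr, hrp, hsource⟩ := hp.exists_common_source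
  have hpe : IsStarProjection (p * e) := hp.isStarProjection.mul heproj (hp.commute e he)
  have hepe : e * (p * e) = p * e := by
    rw [(hp.commute e he).eq, ← mul_assoc, heproj.isIdempotentElem.eq]
  have hpep : p * e * p = p * e := by
    rw [mul_assoc, ← (hp.commute e he).eq, ← mul_assoc, hp.isStarProjection.isIdempotentElem.eq]
  have hqp : q * p = q := by rw [← hqe, mul_assoc, hpep]
  have heq : p * e * q = q := by
    simpa only [star_mul, hqproj.isSelfAdjoint.star_eq, hpe.isSelfAdjoint.star_eq] using
      congrArg star hqe
  have hq' : IsStarProjection (p * e - q) := hqproj.sub_of_mul_eq_left hpe hqe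
  have horth : q * (p * e - q) = 0 := by
    rw [mul_sub, hqe, hqproj.isIdempotentElem.eq, sub_self]
  obtain ⟨w, hwD, hqw, hw⟩ := hsource q hq hqproj hqp hq0
  obtain ⟨w', hwD', hqw', hw'⟩ := hsource (p * e - q) (sub_mem (mul_mem hp.mem he) hq) hq'
    (by rw [sub_mul, hpep, hqp]) (sub_ne_zero.2 hne.symm)
  have hww' : star w * w' = 0 := by
    rw [← hqw, ← hqw', star_mul, hqproj.isSelfAdjoint.star_eq, mul_assoc, ← mul_assoc q, horth,
      zero_mul, mul_zero]
  have hww : star w' * w = 0 := by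
    simpa only [star_mul, star_star, star_zero] using congrArg star hww'
  refine ⟨r, hr, hrp, fun b ↦ cond b w w', ?_, ?_, ?_, ?_⟩
  · rintro (_ | _) <;> assumption
  · rintro (_ | _)
    · change e * w' = w'
      rw [← hqw', ← mul_assoc, mul_sub, hepe, ← heq, ← mul_assoc, hepe]
    · change e * w = w
      rw [← hqw, ← mul_assoc, ← heq, ← mul_assoc, hepe]
  · rintro (_ | _) <;> assumption
  · rintro (_ | _) (_ | _) h
    exacts [absurd rfl h, hww, hww', absurd rfl h]

theorem _root_.IsAFPresentation.comp {S : ℕ → NonUnitalStarSubalgebra ℂ A}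
    (hS : IsAFPresentation A S) {n : ℕ → ℕ} (hn : StrictMono n) : IsAFPresentation A (S ∘ n) := by
  obtain ⟨hmono, hfin, hdense⟩ := hS
  exact ⟨hmono.comp hn.monotone, fun k ↦ hfin _, hdense.mono <| Set.iUnion_subset fun k ↦
    Set.subset_iUnion_of_subset k (hmono hn.le_apply)⟩

theorem exists_isBranchingSystem {S : ℕ → NonUnitalStarSubalgebra ℂ A}
    (hS : IsAFPresentation A S) (hF : HasFermionProperty A S) :
    ∃ B P, IsAFPresentation A B ∧ IsBranchingSystem B P := by
  obtain ⟨n, p, hn, hpD, hp, hp0, hpc, hpmin, hstep⟩ := hF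
  have hpmc (k : ℕ) : IsMinimalCentralProjection (S (n k)) (p k) :=
    ⟨hpD k, ⟨(hp k).1, (hp k).2⟩, hp0 k, hpc k, fun z hz hzp ↦
      hpmin k z hz ⟨hzp.isIdempotentElem, hzp.isSelfAdjoint⟩⟩
  have hB := hS.comp hn
  have hfin (k : ℕ) : FiniteDimensional ℂ (S (n k)) := hB.2.1 k
  refine ⟨S ∘ n, fun k ↦ {e | IsMinimalProjection (S (n k)) e ∧ e * p k = e}, hB, hB.1,
    fun k e he ↦ he.1, ?_, fun k e ⟨he, hep⟩ ↦ ?_⟩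
  · obtain ⟨r, hr, hrp, -⟩ := (hpmc 0).exists_common_source
    exact ⟨r, hr, hrp⟩
  · obtain ⟨-, q, hqD, ⟨hqi, hqs⟩, hq0, hqe, -, hne⟩ := hstep k e he.mem
      ⟨he.isStarProjection.isIdempotentElem, he.isStarProjection.isSelfAdjoint⟩
      he.ne_zero hep he.exists_smul_eq
    obtain ⟨r, hr, hrp, hw⟩ := (hpmc (k + 1)).exists_isIsometryFamily_bool
      (hS.1 (hn k.lt_succ_self).le he.mem) he.isStarProjection hqD ⟨hqi, hqs⟩ hq0 hqe hne
    exact ⟨r, ⟨hr, hrp⟩, hw⟩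

end Branching

section BlockMatrices

open scoped Matrix.Norms.L2Operator

variable {X : Type*} [NonUnitalCStarAlgebra X] {T κ : Type*}

/-- Partial isometries `z t` with pairwise orthogonal ranges, where the source `g (L t)` of `z t`
depends only on the label `L t` and the products `star (z s) * a * z t` with `a ∈ D` are scalar
multiples of sources. -/
structure IsPartialIsometrySystem (D : NonUnitalStarSubalgebra ℂ X) (L : T → κ) (g : κ → X)
    (z : T → X) : Prop where
  mem : ∀ t, z t ∈ D
  isStarProjection : ∀ t, IsStarProjection (g (L t))
  ne_zero : ∀ t, g (L t) ≠ 0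
  star_mul_self_eq : ∀ t, star (z t) * z t = g (L t)
  star_mul_eq_zero : Pairwise fun s t ↦ star (z s) * z t = 0
  exists_smul_eq : ∀ a ∈ D, ∀ s t, ∃ c : ℂ, star (z s) * a * z t = c • g (L t)

/-- A functional of norm at most one which attains its norm at `x`. -/
noncomputable def normingFunctional (x : X) : X →L[ℂ] ℂ :=
  (exists_dual_vector'' ℂ x).choose

theorem norm_normingFunctional_le (x : X) : ‖normingFunctional x‖ ≤ 1 :=
  (exists_dual_vector'' ℂ x).choose_spec.1

theorem normingFunctional_smul_self {p : X} (hp : IsStarProjection p) (hp0 : p ≠ 0) (c : ℂ) :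
    normingFunctional p (c • p) = c := by
  have hnorm : ‖p‖ = 1 := by
    have h := CStarRing.norm_star_mul_self (x := p)
    rw [hp.isSelfAdjoint.star_eq, hp.isIdempotentElem.eq] at h
    exact (mul_eq_left₀ (norm_ne_zero_iff.2 hp0)).1 h.symm
  rw [map_smul, normingFunctional, (exists_dual_vector'' ℂ p).choose_spec.2, hnorm]
  simp

open Classical in
/-- The block diagonal matrix of coefficients of an element with respect to a system of partial
isometries; the scalars are read off from `star (z s) * x * z t` by norming functionals. -/
noncomputable def coeff (L : T → κ) (g : κ → X) (z : T → X) : X →ₗ[ℂ] Matrix T T ℂ where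
  toFun x := .of fun s t ↦
    if L s = L t then normingFunctional (g (L t)) (star (z s) * x * z t) else 0
  map_add' a b := by
    ext s t
    simp only [Matrix.of_apply, Matrix.add_apply]
    split_ifs <;> simp [mul_add, add_mul]
  map_smul' k a := by
    ext s t
    simp [mul_smul_comm, smul_mul_assoc]

open Classical in
theorem coeff_apply (L : T → κ) (g : κ → X) (z : T → X) (x : X) (s t : T) : coeff L g z x s t =
    if L s = L t then normingFunctional (g (L t)) (star (z s) * x * z t) else 0 := rfl

namespace IsPartialIsometrySystem

variable {D : NonUnitalStarSubalgebra ℂ X} {L : T → κ} {g : κ → X} {z : T → X}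
  (hz : IsPartialIsometrySystem D L g z)
include hz

theorem mul_source (t : T) : z t * g (L t) = z t :=
  mul_eq_self_of_star_mul_self_eq (hz.isStarProjection t) (hz.star_mul_self_eq t)

theorem star_mul_mul_eq_coeff_smul {a : X} (ha : a ∈ D) {s t : T} (h : L s = L t) :
    star (z s) * a * z t = coeff L g z a s t • g (L t) := by
  obtain ⟨c, hc⟩ := hz.exists_smul_eq a ha s t
  rw [coeff_apply, if_pos h, hc,
    normingFunctional_smul_self (hz.isStarProjection t) (hz.ne_zero t)]

theorem coeff_eq {x : X} {c : Matrix T T ℂ} (hc : ∀ s t, L s ≠ L t → c s t = 0)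
    (hx : ∀ s t, L s = L t → star (z s) * x * z t = c s t • g (L t)) : coeff L g z x = c := by
  ext s t
  rw [coeff_apply]
  split_ifs with h
  · rw [hx s t h, normingFunctional_smul_self (hz.isStarProjection t) (hz.ne_zero t)]
  · exact (hc s t h).symm

theorem norm_sum_smul_sq_le (F : Finset T) (α : T → ℂ) :
    ‖∑ t ∈ F, α t • z t‖ ^ 2 ≤ ∑ t ∈ F, ‖α t‖ ^ 2 := by
  have hexpand : star (∑ t ∈ F, α t • z t) * ∑ t ∈ F, α t • z t =
      ∑ t ∈ F, (star (α t) * α t) • (star (z t) * z t) := by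
    rw [star_sum, Finset.sum_mul]
    refine Finset.sum_congr rfl fun s hs ↦ ?_
    rw [Finset.mul_sum, Finset.sum_eq_single_of_mem s hs fun t _ hts ↦ ?_, star_smul,
      smul_mul_smul_comm]
    rw [star_smul, smul_mul_smul_comm, hz.star_mul_eq_zero hts.symm, smul_zero]
  rw [sq, ← CStarRing.norm_star_mul_self, hexpand]
  refine (norm_sum_le _ _).trans (Finset.sum_le_sum fun t _ ↦ ?_)
  rw [norm_smul, norm_mul, norm_star, sq, hz.star_mul_self_eq]
  exact mul_le_of_le_one_right (by positivity) (hz.isStarProjection t).norm_le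

end IsPartialIsometrySystem

open Classical in
/-- The block diagonal matrix with the entries of `c` in place of the scalars, for the refinement of
a partial isometry system along `L t = i α`. -/
noncomputable def refineMatrix {S : Type*} (L : T → κ) (i : S → κ) (c : Matrix T T ℂ) :
    Matrix (L.Pullback i) (L.Pullback i) ℂ :=
  .of fun x x' ↦ if x.snd = x'.snd then c x.fst x'.fst else 0

variable {S κ' : Type*} {D D' : NonUnitalStarSubalgebra ℂ X} {L : T → κ} {g : κ → X} {z : T → X}
  {L' : S → κ'} {g' : κ' → X} {y : S → X} {i : S → κ}

theorem refineMatrix_apply_eq_zero (c : Matrix T T ℂ) (x x' : L.Pullback i)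
    (h : L' x.snd ≠ L' x'.snd) : refineMatrix L i c x x' = 0 :=
  if_neg fun hx ↦ h (congrArg L' hx)

theorem refineMatrix_star (c : Matrix T T ℂ) :
    refineMatrix L i (star c) = star (refineMatrix L i c) := by
  ext x x'
  simp only [refineMatrix, Matrix.star_apply, Matrix.of_apply, apply_ite star, star_zero]
  congr 1
  exact propext eq_comm

theorem source_mul_snd (hg : ∀ α, g (i α) * y α = y α) (x : L.Pullback i) :
    g (L x.fst) * y x.snd = y x.snd := by
  rw [show L x.fst = i x.snd from x.2, hg]

theorem IsPartialIsometrySystem.refine (hz : IsPartialIsometrySystem D L g z)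
    (hy : IsPartialIsometrySystem D' L' g' y) (hg : ∀ α, g (i α) * y α = y α) (hD : D ≤ D') :
    IsPartialIsometrySystem D' (fun x : L.Pullback i ↦ L' x.snd) g'
      fun x ↦ z x.fst * y x.snd where
  mem x := mul_mem (hD (hz.mem x.fst)) (hy.mem x.snd)
  isStarProjection x := hy.isStarProjection x.snd
  ne_zero x := hy.ne_zero x.snd
  star_mul_self_eq x := by
    rw [star_mul, mul_assoc, ← mul_assoc (star (z x.fst)), hz.star_mul_self_eq,
      source_mul_snd hg, hy.star_mul_self_eq]
  star_mul_eq_zero x x' hx := by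
    change star (z x.fst * y x.snd) * (z x'.fst * y x'.snd) = 0
    rw [star_mul, mul_assoc, ← mul_assoc (star (z x.fst))]
    obtain h | h := eq_or_ne x.fst x'.fst
    · rw [h, hz.star_mul_self_eq, source_mul_snd hg]
      exact hy.star_mul_eq_zero fun h' ↦ hx (Subtype.ext (Prod.ext h h'))
    · rw [hz.star_mul_eq_zero h, zero_mul, mul_zero]
  exists_smul_eq a ha x x' := by
    obtain ⟨c, hc⟩ := hy.exists_smul_eq (star (z x.fst) * a * z x'.fst)
      (mul_mem (mul_mem (star_mem (hD (hz.mem x.fst))) ha) (hD (hz.mem x'.fst))) x.snd x'.snd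
    exact ⟨c, by simpa only [star_mul, mul_assoc] using hc⟩

theorem IsPartialIsometrySystem.coeff_refine (hz : IsPartialIsometrySystem D L g z)
    (hy : IsPartialIsometrySystem D' L' g' y) (hg : ∀ α, g (i α) * y α = y α) (hD : D ≤ D') {a : X}
    (ha : a ∈ D) :
    coeff (fun x : L.Pullback i ↦ L' x.snd) g' (fun x ↦ z x.fst * y x.snd) a =
      refineMatrix L i (coeff L g z a) := by
  refine (hz.refine hy hg hD).coeff_eq (refineMatrix_apply_eq_zero _) fun x x' _ ↦ ?_
  obtain ⟨c, hc⟩ := hz.exists_smul_eq a ha x.fst x'.fst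
  have hcy : star (z x.fst * y x.snd) * a * (z x'.fst * y x'.snd) =
      c • (star (y x.snd) * y x'.snd) := by
    calc
      _ = star (y x.snd) * (star (z x.fst) * a * z x'.fst) * y x'.snd := by
        simp only [star_mul, mul_assoc]
      _ = _ := by rw [hc, mul_smul_comm, smul_mul_assoc, mul_assoc, source_mul_snd hg]
  rw [hcy, refineMatrix, Matrix.of_apply]
  split_ifs with h
  · have hL : L x.fst = L x'.fst :=
      (show L x.fst = i x.snd from x.2).trans ((congrArg i h).trans x'.2.symm)
    rw [hz.star_mul_mul_eq_coeff_smul ha hL] at hc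
    rw [h, hy.star_mul_self_eq,
      smul_left_injective ℂ (hz.ne_zero x'.fst) hc]
  · rw [hy.star_mul_eq_zero h, smul_zero, zero_smul]

variable [Fintype T]

/-- The algebra of the matrices that are block diagonal for the partition of the indices by `L`. -/
def blockAlgebra (L : T → κ) : NonUnitalStarSubalgebra ℂ (Matrix T T ℂ) where
  carrier := {c | ∀ s t, L s ≠ L t → c s t = 0}
  add_mem' ha hb s t h := by rw [Matrix.add_apply, ha s t h, hb s t h, add_zero]
  zero_mem' _ _ _ := rfl
  mul_mem' {a b} ha hb s t h := by
    rw [Matrix.mul_apply]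
    refine Finset.sum_eq_zero fun r _ ↦ ?_
    by_cases hr : L s = L r
    · rw [hb r t (hr ▸ h), mul_zero]
    · rw [ha s r hr, zero_mul]
  smul_mem' c a ha s t h := by rw [Matrix.smul_apply, ha s t h, smul_zero]
  star_mem' ha s t h := by rw [Matrix.star_apply, ha t s h.symm, star_zero]

theorem one_mem_blockAlgebra [DecidableEq T] (L : T → κ) : (1 : Matrix T T ℂ) ∈ blockAlgebra L :=
  fun _ _ h ↦ Matrix.one_apply_ne fun hst ↦ h (congrArg L hst)

/-- The element `∑ c s t • z s * star (z t)` with matrix `c` with respect to the family `z`. -/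
def matrixSum (z : T → X) : Matrix T T ℂ →ₗ[ℂ] X where
  toFun c := ∑ s, ∑ t, c s t • (z s * star (z t))
  map_add' a b := by simp [add_smul, Finset.sum_add_distrib]
  map_smul' k a := by simp [mul_smul, Finset.smul_sum]

theorem matrixSum_apply (z : T → X) (c : Matrix T T ℂ) :
    matrixSum z c = ∑ s, ∑ t, c s t • (z s * star (z t)) := rfl

/-- The sum of the range projections of the partial isometries `z t`. -/
def rangeProjection (z : T → X) : X := ∑ t, z t * star (z t)

theorem matrixSum_one [DecidableEq T] (z : T → X) : matrixSum z 1 = rangeProjection z := by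
  simp [matrixSum_apply, rangeProjection, Matrix.one_apply]

theorem matrixSum_star (z : T → X) (c : Matrix T T ℂ) :
    matrixSum z (star c) = star (matrixSum z c) := by
  simp only [matrixSum_apply, star_sum, star_smul, star_mul, star_star, Matrix.star_apply]
  exact Finset.sum_comm

theorem coeff_mem_blockAlgebra (L : T → κ) (g : κ → X) (z : T → X) (x : X) :
    coeff L g z x ∈ blockAlgebra L := fun _ _ h ↦ if_neg h

variable [Fintype (L.Pullback i)]

theorem sum_pullback [Fintype S] [DecidableEq κ] {M : Type*} [AddCommMonoid M] (f : T → S → M) :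
    ∑ x : L.Pullback i, f x.fst x.snd = ∑ t, ∑ α with L t = i α, f t α := by
  simp only [Finset.sum_filter, ← Fintype.sum_prod_type']
  rw [← Finset.sum_filter]
  exact (Finset.sum_subtype _ (by simp) fun p : T × S ↦ f p.1 p.2).symm

theorem sum_coeff_eq [DecidableEq κ] (L : T → κ) (g : κ → X) (z : T → X) (x : X) (α β : T → ℂ) :
    ∑ s, ∑ t, star (α s) * coeff L g z x s t * β t =
      ∑ i ∈ Finset.univ.image L, normingFunctional (g i)
        (star (∑ s with L s = i, α s • z s) * x * ∑ t with L t = i, β t • z t) := by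
  rw [← Finset.sum_fiberwise_of_maps_to fun t ↦ Finset.mem_image_of_mem L]
  refine Finset.sum_congr rfl fun i _ ↦ ?_
  rw [star_sum, Finset.sum_mul, Finset.sum_mul, map_sum]
  refine Finset.sum_congr rfl fun s hs ↦ ?_
  obtain rfl : L s = i := (Finset.mem_filter.1 hs).2
  rw [Finset.mul_sum, map_sum, Finset.sum_filter]
  refine Finset.sum_congr rfl fun t _ ↦ ?_
  obtain h | h := eq_or_ne (L s) (L t)
  · rw [coeff_apply, if_pos h, if_pos h.symm, h]
    simp only [star_smul, smul_mul_assoc, mul_smul_comm, map_smul, smul_eq_mul]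
    ring
  · rw [coeff_apply, if_neg h, if_neg h.symm, mul_zero, zero_mul]

namespace IsPartialIsometrySystem

variable (hz : IsPartialIsometrySystem D L g z)
include hz

theorem matrixSum_mul_apply {c : Matrix T T ℂ} (hc : c ∈ blockAlgebra L) (t : T) :
    matrixSum z c * z t = ∑ s, c s t • z s := by
  rw [matrixSum_apply, Finset.sum_mul]
  refine Finset.sum_congr rfl fun s _ ↦ ?_
  rw [Finset.sum_mul, Finset.sum_eq_single t (fun r _ hr ↦ ?_) (by simp), smul_mul_assoc,
    mul_assoc, hz.star_mul_self_eq]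
  · obtain h | h := eq_or_ne (L s) (L t)
    · rw [← h, hz.mul_source]
    · rw [hc s t h, zero_smul, zero_smul]
  · rw [smul_mul_assoc, mul_assoc, hz.star_mul_eq_zero hr, mul_zero, smul_zero]

theorem matrixSum_mul {c : Matrix T T ℂ} (hc : c ∈ blockAlgebra L) (d : Matrix T T ℂ) :
    matrixSum z (c * d) = matrixSum z c * matrixSum z d := by
  have hmul (r t : T) : matrixSum z c * (d r t • (z r * star (z t))) =
      ∑ s, (c s r * d r t) • (z s * star (z t)) := by
    rw [mul_smul_comm, ← mul_assoc, hz.matrixSum_mul_apply hc, Finset.sum_mul, Finset.smul_sum]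
    simp only [smul_mul_assoc, smul_smul, mul_comm]
  rw [matrixSum_apply z d]
  simp only [Finset.mul_sum, hmul]
  simp only [matrixSum_apply, Matrix.mul_apply, Finset.sum_smul]
  exact (Finset.sum_congr rfl fun _ _ ↦ Finset.sum_comm).trans <| Finset.sum_comm.trans <|
    Finset.sum_congr rfl fun _ _ ↦ Finset.sum_comm

theorem norm_matrixSum_le [DecidableEq T] {c : Matrix T T ℂ} (hc : c ∈ blockAlgebra L) :
    ‖matrixSum z c‖ ≤ ‖c‖ := by
  have _ : IsClosed (blockAlgebra L : Set (Matrix T T ℂ)) :=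
    (blockAlgebra L).toSubmodule.closed_of_finiteDimensional
  let _ : NonUnitalCStarAlgebra (blockAlgebra L) :=
    NonUnitalStarSubalgebra.nonUnitalCStarAlgebra _
  let φ : blockAlgebra L →⋆ₙₐ[ℂ] X :=
    { toFun := fun c ↦ matrixSum z c
      map_smul' := fun k c ↦ map_smul (matrixSum z) k c.1
      map_zero' := map_zero (matrixSum z)
      map_add' := fun a b ↦ map_add (matrixSum z) a.1 b.1
      map_mul' := fun a b ↦ hz.matrixSum_mul a.2 b
      map_star' := fun a ↦ matrixSum_star z a }
  exact NonUnitalStarAlgHom.norm_apply_le φ ⟨c, hc⟩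

theorem star_mul_matrixSum_mul {c : Matrix T T ℂ} (hc : c ∈ blockAlgebra L) (s t : T) :
    star (z s) * matrixSum z c * z t = c s t • g (L s) := by
  rw [mul_assoc, hz.matrixSum_mul_apply hc, Finset.mul_sum,
    Finset.sum_eq_single s (fun r _ hr ↦ ?_) (by simp), mul_smul_comm, hz.star_mul_self_eq]
  rw [mul_smul_comm, hz.star_mul_eq_zero hr.symm, smul_zero]

theorem coeff_matrixSum {c : Matrix T T ℂ} (hc : c ∈ blockAlgebra L) :
    coeff L g z (matrixSum z c) = c :=
  hz.coeff_eq hc fun s t h ↦ by rw [hz.star_mul_matrixSum_mul hc, h]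

theorem rangeProjection_mul (t : T) : rangeProjection z * z t = z t := by
  classical
  rw [← matrixSum_one, hz.matrixSum_mul_apply (one_mem_blockAlgebra L)]
  simp [Matrix.one_apply]

theorem rangeProjection_mul_matrixSum (c : Matrix T T ℂ) :
    rangeProjection z * matrixSum z c = matrixSum z c := by
  classical
  rw [← matrixSum_one, ← hz.matrixSum_mul (one_mem_blockAlgebra L), one_mul]

theorem matrixSum_mul_rangeProjection {c : Matrix T T ℂ} (hc : c ∈ blockAlgebra L) :
    matrixSum z c * rangeProjection z = matrixSum z c := by
  classical
  rw [← matrixSum_one, ← hz.matrixSum_mul hc, mul_one]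

theorem isStarProjection_rangeProjection : IsStarProjection (rangeProjection z) where
  isIdempotentElem := by
    classical
    simpa only [IsIdempotentElem, matrixSum_one] using hz.rangeProjection_mul_matrixSum 1
  isSelfAdjoint := isSelfAdjoint_sum _ fun t _ ↦ .mul_star_self (z t)

theorem matrixSum_mem (c : Matrix T T ℂ) : matrixSum z c ∈ D :=
  sum_mem fun s _ ↦ sum_mem fun t _ ↦
    SMulMemClass.smul_mem _ (mul_mem (hz.mem s) (star_mem (hz.mem t)))

theorem rangeProjection_mul_rangeProjection_pullback (y : S → X) :
    rangeProjection z * rangeProjection (fun x : L.Pullback i ↦ z x.fst * y x.snd) =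
      rangeProjection fun x : L.Pullback i ↦ z x.fst * y x.snd := by
  rw [rangeProjection, rangeProjection, Finset.mul_sum]
  refine Finset.sum_congr rfl fun x _ ↦ ?_
  rw [← mul_assoc, ← mul_assoc, ← rangeProjection, hz.rangeProjection_mul]

theorem rangeProjection_pullback [Fintype S] [DecidableEq κ] {y : S → X}
    (hy : ∀ t, ∑ α with L t = i α, y α * star (y α) = g (L t)) :
    rangeProjection (fun x : L.Pullback i ↦ z x.fst * y x.snd) = rangeProjection z := by
  rw [rangeProjection, sum_pullback fun t α ↦ z t * y α * star (z t * y α)]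
  refine Finset.sum_congr rfl fun t _ ↦ ?_
  calc
    _ = z t * (∑ α with L t = i α, y α * star (y α)) * star (z t) := by
      simp only [Finset.mul_sum, Finset.sum_mul, star_mul, mul_assoc]
    _ = z t * star (z t) := by rw [hy, hz.mul_source]

theorem coeff_rangeProjection_mul (x : X) :
    coeff L g z (rangeProjection z * x) = coeff L g z x := by
  have hstar (s : T) : star (z s) * rangeProjection z = star (z s) := by
    simpa only [star_mul, hz.isStarProjection_rangeProjection.isSelfAdjoint.star_eq] using
      congrArg star (hz.rangeProjection_mul s)
  ext s t
  rw [coeff_apply, coeff_apply, ← mul_assoc, hstar]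

theorem norm_sum_coeff_le (x : X) (α β : EuclideanSpace ℂ T) :
    ‖∑ s, ∑ t, star (α s) * coeff L g z x s t * β t‖ ≤ ‖x‖ * (‖α‖ * ‖β‖) := by
  classical
  let part (α : EuclideanSpace ℂ T) (i : κ) : X := ∑ t with L t = i, α t • z t
  have hpart (α : EuclideanSpace ℂ T) :
      √(∑ i ∈ Finset.univ.image L, ‖part α i‖ ^ 2) ≤ ‖α‖ := by
    rw [EuclideanSpace.norm_eq, ← Finset.sum_fiberwise_of_maps_to fun t ↦
      Finset.mem_image_of_mem L]
    exact Real.sqrt_le_sqrt <| Finset.sum_le_sum fun i _ ↦ hz.norm_sum_smul_sq_le _ _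
  have hterm (i : κ) : ‖normingFunctional (g i) (star (part α i) * x * part β i)‖ ≤
      ‖x‖ * (‖part α i‖ * ‖part β i‖) := by
    calc
      _ ≤ ‖star (part α i) * x * part β i‖ :=
        (normingFunctional (g i)).le_of_opNorm_le_of_le (norm_normingFunctional_le _) le_rfl
          |>.trans_eq (one_mul _)
      _ ≤ ‖star (part α i)‖ * ‖x‖ * ‖part β i‖ := norm_mul₃_le
      _ = _ := by rw [norm_star]; ring
  rw [sum_coeff_eq]
  calc
    _ ≤ ∑ i ∈ Finset.univ.image L, ‖x‖ * (‖part α i‖ * ‖part β i‖) :=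
      norm_sum_le_of_le _ fun i _ ↦ hterm i
    _ ≤ ‖x‖ * (√(∑ i ∈ Finset.univ.image L, ‖part α i‖ ^ 2) *
        √(∑ i ∈ Finset.univ.image L, ‖part β i‖ ^ 2)) := by
      rw [← Finset.mul_sum]
      gcongr
      exact Real.sum_mul_le_sqrt_mul_sqrt _ _ _
    _ ≤ ‖x‖ * (‖α‖ * ‖β‖) := by gcongr <;> exact hpart _

theorem norm_coeff_le [DecidableEq T] (x : X) : ‖coeff L g z x‖ ≤ ‖x‖ := by
  rw [Matrix.cstar_norm_def]
  refine ContinuousLinearMap.opNorm_le_bound _ (norm_nonneg _) fun β ↦ ?_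
  set α := Matrix.toEuclideanCLM (n := T) (𝕜 := ℂ) (coeff L g z x) β with hα
  have hsum : ∑ s, ∑ t, star (α s) * coeff L g z x s t * β t = ((‖α‖ ^ 2 : ℝ) : ℂ) := by
    rw [EuclideanSpace.norm_sq_eq, Complex.ofReal_sum]
    refine Finset.sum_congr rfl fun s _ ↦ ?_
    have hαs : α s = ∑ t, coeff L g z x s t * β t := by
      rw [hα, Matrix.ofLp_toEuclideanCLM]
      rfl
    simp only [mul_assoc, ← Finset.mul_sum]
    rw [← hαs, Complex.ofReal_pow]
    exact Complex.conj_mul' _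
  have hle := hz.norm_sum_coeff_le x α β
  rw [hsum, Complex.norm_real, norm_pow, norm_norm, mul_left_comm, sq] at hle
  obtain h | h := (norm_nonneg α).eq_or_lt
  · rw [← h]
    positivity
  · exact le_of_mul_le_mul_left hle h

theorem matrixSum_coeff_eq_self (hdisc : ∀ a ∈ D, ∀ s t, L s ≠ L t → star (z s) * a * z t = 0)
    {a : X} (ha : a ∈ D) (hleft : rangeProjection z * a = a) (hright : a * rangeProjection z = a) :
    matrixSum z (coeff L g z a) = a := by
  have hterm (s t : T) : z s * star (z s) * a * (z t * star (z t)) =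
      coeff L g z a s t • (z s * star (z t)) := by
    rw [← mul_assoc, mul_assoc (z s), mul_assoc (z s)]
    obtain h | h := eq_or_ne (L s) (L t)
    · rw [hz.star_mul_mul_eq_coeff_smul ha h, mul_smul_comm, ← h, hz.mul_source, smul_mul_assoc]
    · rw [hdisc a ha s t h, mul_zero, zero_mul, coeff_mem_blockAlgebra L g z a s t h, zero_smul]
  calc
    matrixSum z (coeff L g z a) = rangeProjection z * a * rangeProjection z := by
      simp only [matrixSum_apply, rangeProjection, Finset.sum_mul, Finset.mul_sum, hterm]
      exact Finset.sum_comm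
    _ = a := by rw [hleft, hright]

end IsPartialIsometrySystem

namespace IsPartialIsometrySystem

variable (hz : IsPartialIsometrySystem D L g z) (hy : IsPartialIsometrySystem D' L' g' y)
  (hg : ∀ α, g (i α) * y α = y α) (hD : D ≤ D')
include hz hy hg hD

theorem matrixSum_mul_rangeProjection_refine [Finite S] {c : Matrix T T ℂ}
    (hc : c ∈ blockAlgebra L) :
    matrixSum z c * rangeProjection (fun x : L.Pullback i ↦ z x.fst * y x.snd) =
      matrixSum (fun x : L.Pullback i ↦ z x.fst * y x.snd) (refineMatrix L i c) := by
  classical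
  have := Fintype.ofFinite S
  have hz' := hz.refine hy hg hD
  have hc' := refineMatrix_apply_eq_zero (L := L) (L' := L') (i := i) c
  have hterm (x : L.Pullback i) : matrixSum z c * (z x.fst * y x.snd) =
      matrixSum (fun x : L.Pullback i ↦ z x.fst * y x.snd) (refineMatrix L i c) *
        (z x.fst * y x.snd) := by
    rw [← mul_assoc, hz.matrixSum_mul_apply hc, Finset.sum_mul, hz'.matrixSum_mul_apply hc' x]
    calc
      _ = ∑ s with L s = i x.snd, (c s x.fst • z s) * y x.snd := by
        refine (Finset.sum_filter_of_ne fun s _ hs ↦ ?_).symm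
        by_contra h
        refine hs ?_
        rw [hc s x.fst fun h' ↦ h (h'.trans x.2), zero_smul, zero_mul]
      _ = ∑ x' : L.Pullback i,
          if x'.snd = x.snd then (c x'.fst x.fst • z x'.fst) * y x.snd else 0 := by
        rw [sum_pullback fun s α ↦ if α = x.snd then (c s x.fst • z s) * y x.snd else 0]
        simp only [Finset.sum_filter, Finset.sum_ite_eq', Finset.mem_filter_univ]
      _ = _ := by
        refine Finset.sum_congr rfl fun x' _ ↦ ?_
        rw [refineMatrix, Matrix.of_apply]
        split_ifs with h
        · rw [h, smul_mul_assoc]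
        · rw [zero_smul]
  rw [← hz'.matrixSum_mul_rangeProjection hc', rangeProjection, Finset.mul_sum, Finset.mul_sum]
  exact Finset.sum_congr rfl fun x _ ↦ by rw [← mul_assoc, hterm, mul_assoc]

theorem rangeProjection_refine_mul_matrixSum [Finite S] {c : Matrix T T ℂ}
    (hc : c ∈ blockAlgebra L) :
    rangeProjection (fun x : L.Pullback i ↦ z x.fst * y x.snd) * matrixSum z c =
      matrixSum (fun x : L.Pullback i ↦ z x.fst * y x.snd) (refineMatrix L i c) := by
  have h := hz.matrixSum_mul_rangeProjection_refine hy hg hD (star_mem hc)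
  rw [matrixSum_star, refineMatrix_star, matrixSum_star] at h
  simpa only [star_mul, star_star,
    (hz.refine hy hg hD).isStarProjection_rangeProjection.isSelfAdjoint.star_eq] using
    congrArg star h

end IsPartialIsometrySystem

end BlockMatrices

section Compression

variable {A : Type*} [NonUnitalCStarAlgebra A]

/-- The compression `y ↦ (1 - q) * y * (1 - q)`, written without the unit. -/
def compression (q : A) : A →ₗ[ℂ] A where
  toFun y := y - q * y - y * q + q * y * q
  map_add' x y := by noncomm_ring
  map_smul' c x := by
    simp only [mul_smul_comm, smul_mul_assoc, RingHom.id_apply, smul_add, smul_sub]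

theorem compression_apply (q y : A) : compression q y = y - q * y - y * q + q * y * q := rfl

theorem norm_compression_le {q : A} (hq : IsStarProjection q) (y : A) :
    ‖compression q y‖ ≤ ‖y‖ := by
  have hQ : ‖(1 - q : Unitization ℂ A)‖ ≤ 1 := (hq.inr (R := ℂ)).one_sub.norm_le
  have heq : ((compression q y : A) : Unitization ℂ A) = (1 - q) * y * (1 - q) := by
    simp only [compression_apply, Unitization.inr_add, Unitization.inr_sub, Unitization.inr_mul]
    noncomm_ring
  rw [← Unitization.norm_inr (𝕜 := ℂ), heq, ← Unitization.norm_inr (𝕜 := ℂ) (a := y)]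
  calc
    _ ≤ ‖(1 - q : Unitization ℂ A)‖ * ‖(y : Unitization ℂ A)‖ * ‖(1 - q : Unitization ℂ A)‖ :=
      norm_mul₃_le
    _ ≤ 1 * ‖(y : Unitization ℂ A)‖ * 1 := by gcongr
    _ = ‖(y : Unitization ℂ A)‖ := by rw [one_mul, mul_one]

theorem mul_compression {q : A} (hq : IsIdempotentElem q) (y : A) : q * compression q y = 0 := by
  simp only [compression_apply, mul_add, mul_sub, ← mul_assoc, hq.eq]
  abel

theorem compression_mul {q : A} (hq : IsIdempotentElem q) (y : A) : compression q y * q = 0 := by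
  simp only [compression_apply, add_mul, sub_mul, mul_assoc, hq.eq]
  abel

theorem compression_mem {D : NonUnitalStarSubalgebra ℂ A} {q y : A} (hq : q ∈ D) (hy : y ∈ D) :
    compression q y ∈ D :=
  add_mem (sub_mem (sub_mem hy (mul_mem hq hy)) (mul_mem hy hq)) (mul_mem (mul_mem hq hy) hq)

theorem norm_add_eq_max_of_star_mul_eq_zero {a b : A} (hab : star a * b = 0)
    (hab' : a * star b = 0) : ‖a + b‖ = max ‖a‖ ‖b‖ := by
  have hba : star b * a = 0 := by
    simpa only [star_mul, star_star, star_zero] using congrArg star hab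
  have hsq : star (a + b) * (a + b) = star a * a + star b * b := by
    rw [star_add, add_mul, mul_add, mul_add, hab, hba, add_zero, zero_add]
  have horth : star a * a * (star b * b) = 0 := by
    rw [mul_assoc, ← mul_assoc a, hab', zero_mul, mul_zero]
  have hnorm := (IsSelfAdjoint.star_mul_self a).norm_add_eq_max (.star_mul_self b) horth
  rw [← hsq, CStarRing.norm_star_mul_self, CStarRing.norm_star_mul_self,
    CStarRing.norm_star_mul_self] at hnorm
  refine (mul_self_inj (norm_nonneg _) (le_max_of_le_left (norm_nonneg a))).1 (hnorm.trans ?_)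
  exact (MonotoneOn.map_max (s := Set.Ici 0) (fun _ hx _ _ h ↦ mul_self_le_mul_self hx h)
    (norm_nonneg a) (norm_nonneg b)).symm

end Compression

section MatrixUnits

universe u

theorem IsIsometryFamily.isPartialIsometrySystem {A : Type*} [NonUnitalCStarAlgebra A]
    {D : NonUnitalStarSubalgebra ℂ A} {ι κ : Type*} {e e' : A} {w : ι → A}
    (hw : IsIsometryFamily D e e' w) (he' : IsMinimalProjection D e') (L : ι → κ) :
    IsPartialIsometrySystem D L (fun _ ↦ e') w where
  mem := hw.mem
  isStarProjection _ := he'.isStarProjection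
  ne_zero _ := he'.ne_zero
  star_mul_self_eq := hw.star_mul_self_eq
  star_mul_eq_zero := hw.star_mul_eq_zero
  exists_smul_eq a ha s t := by
    have hwe (t : ι) : w t * e' = w t :=
      mul_eq_self_of_star_mul_self_eq he'.isStarProjection (hw.star_mul_self_eq t)
    obtain ⟨c, hc⟩ := he'.exists_star_mul_eq_smul (mul_mem (star_mem ha) (hw.mem s)) (hw.mem t)
      (by rw [mul_assoc, hwe]) (hwe t)
    exact ⟨c, by simpa only [star_mul, star_star] using hc⟩

theorem IsSourceSystem.isPartialIsometrySystem {G : Type*} [NonUnitalCStarAlgebra G]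
    {D : NonUnitalStarSubalgebra ℂ G} {R : Set G} (hR : IsSourceSystem D R) {S : Type*} {y : S → G}
    (hyD : ∀ s, y s ∈ D) (hyR : ∀ s, star (y s) * y s ∈ R)
    (horth : Pairwise fun s t ↦ star (y s) * y t = 0) :
    IsPartialIsometrySystem D (fun s ↦ star (y s) * y s) id y where
  mem := hyD
  isStarProjection s := (hR.isMinimalProjection _ (hyR s)).isStarProjection
  ne_zero s := (hR.isMinimalProjection _ (hyR s)).ne_zero
  star_mul_self_eq _ := rfl
  star_mul_eq_zero := horth
  exists_smul_eq a ha s t := by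
    have hmin := hR.isMinimalProjection _ (hyR t)
    have hyself (t : S) : y t * (star (y t) * y t) = y t :=
      mul_eq_self_of_star_mul_self_eq (hR.isMinimalProjection _ (hyR t)).isStarProjection rfl
    obtain h | h := eq_or_ne (star (y s) * y s) (star (y t) * y t)
    · obtain ⟨c, hc⟩ := hmin.exists_star_mul_eq_smul (mul_mem (star_mem ha) (hyD s)) (hyD t)
        (by rw [← h, mul_assoc, hyself]) (hyself t)
      exact ⟨c, by simpa only [star_mul, star_star, id] using hc⟩
    · exact ⟨0, by rw [hR.star_mul_mul_eq_zero (hyD s) (hyD t) (hyR s) (hyR t) h ha, zero_smul]⟩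

/-- A partial isometry system whose members with different labels are not connected through `D`:
matrix units of `D` when the labels are the sources. -/
structure IsMatrixUnitSystem {X : Type*} [NonUnitalCStarAlgebra X]
    (D : NonUnitalStarSubalgebra ℂ X) {T : Type*} (L : T → X) (z : T → X) : Prop extends
    IsPartialIsometrySystem D L id z where
  disconnected : ∀ a ∈ D, ∀ s t, L s ≠ L t → star (z s) * a * z t = 0

namespace IsMatrixUnitSystem

variable {X : Type u} [NonUnitalCStarAlgebra X] {D D' : NonUnitalStarSubalgebra ℂ X} {T : Type*}
  {L z : T → X}

theorem refine {S : Type*} {L' y i : S → X} (hz : IsMatrixUnitSystem D L z)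
    (hy : IsMatrixUnitSystem D' L' y) (hi : ∀ α, i α * y α = y α) (hD : D ≤ D') :
    IsMatrixUnitSystem D' (fun x : L.Pullback i ↦ L' x.snd) fun x ↦ z x.fst * y x.snd where
  toIsPartialIsometrySystem :=
    hz.toIsPartialIsometrySystem.refine hy.toIsPartialIsometrySystem hi hD
  disconnected a ha x x' h := by
    simpa only [star_mul, mul_assoc] using hy.disconnected (star (z x.fst) * a * z x'.fst)
      (mul_mem (mul_mem (star_mem (hD (hz.mem x.fst))) ha) (hD (hz.mem x'.fst))) x.snd x'.snd h

theorem label_mul_label_eq_zero (hz : IsMatrixUnitSystem D L z) {s t : T} (h : L s ≠ L t) :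
    L s * L t = 0 := by
  have := hz.disconnected _ (mul_mem (hz.mem s) (star_mem (hz.mem t))) s t h
  rwa [← mul_assoc, hz.star_mul_self_eq, mul_assoc, hz.star_mul_self_eq] at this

theorem exists_isMatrixUnitSystem_sum_eq [DecidableEq X] [Finite T] [FiniteDimensional ℂ D']
    (hz : IsMatrixUnitSystem D L z) (hD : D ≤ D') :
    ∃ (S : Type u) (_ : Fintype S) (L' y i : S → X), IsMatrixUnitSystem D' L' y ∧
      (∀ α, i α * y α = y α) ∧ ∀ t, ∑ α with L t = i α, y α * star (y α) = L t := by
  have _ := Fintype.ofFinite (Set.range L)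
  obtain ⟨R, hR⟩ := exists_isSourceSystem D'
  have hframe (i : Set.range L) : ∃ F, IsFrame D' R F ∧ ∑ u ∈ F, u * star u = i := by
    obtain ⟨_, t, rfl⟩ := i
    have hLD : L t ∈ D := by
      rw [← id_eq (L t), ← hz.star_mul_self_eq]
      exact mul_mem (star_mem (hz.mem t)) (hz.mem t)
    exact hR.exists_isFrame (hD hLD) (hz.isStarProjection t)
  choose F hF hsum using hframe
  let y (α : Σ i, F i) : X := α.2
  have hyD (α : Σ i, F i) : y α ∈ D' := (hF α.1).mem _ α.2.2
  have hyR (α : Σ i, F i) : star (y α) * y α ∈ R := (hF α.1).source_mem _ α.2.2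
  have hi (α : Σ i, F i) : α.1 * y α = y α := by
    rw [← hsum, (hF α.1).sum_mul_self hR subset_rfl α.2.2]
  have horth : Pairwise fun α β ↦ star (y α) * y β = 0 := by
    refine hR.pairwise_star_mul_eq_zero_sigma hF ?_
    rintro ⟨_, s, rfl⟩ ⟨_, t, rfl⟩ hst
    rw [hsum, hsum]
    exact hz.label_mul_label_eq_zero fun h ↦ hst (Subtype.ext h)
  refine ⟨Σ i, F i, inferInstance, _, y, fun α ↦ α.1,
    ⟨hR.isPartialIsometrySystem hyD hyR horth, fun a ha s t h ↦
      hR.star_mul_mul_eq_zero (hyD s) (hyD t) (hyR s) (hyR t) h ha⟩, hi, fun t ↦ ?_⟩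
  rw [Finset.sum_filter, Fintype.sum_sigma, Fintype.sum_eq_single ⟨L t, t, rfl⟩ fun i hit ↦ ?_]
  · simp only [if_true]
    exact (Finset.sum_coe_sort _ fun u ↦ u * star u).trans (hsum _)
  · exact Finset.sum_eq_zero fun u _ ↦ if_neg fun h ↦ hit (Subtype.ext h.symm)

end IsMatrixUnitSystem

end MatrixUnits

section Stages

open scoped Matrix.Norms.L2Operator

universe u

variable {G : Type u} [CStarAlgebra G] {A : Type*} [NonUnitalCStarAlgebra A]

/-- Matrix units `u t` of `D` with total range projection `1`, matched with partial isometries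
`v t ∈ B level` whose sources are all equal to one minimal projection `e ∈ P level`. Replacing `u`
by `v` sends `D` block diagonally into `B level`. -/
structure Stage (D : NonUnitalStarSubalgebra ℂ G) (B : ℕ → NonUnitalStarSubalgebra ℂ A)
    (P : ℕ → Set A) where
  Index : Type u
  fintype : Fintype Index
  label : Index → G
  u : Index → G
  v : Index → A
  level : ℕ
  e : A
  e_mem : e ∈ P level
  isMatrixUnitSystem : IsMatrixUnitSystem D label u
  rangeProjection_u : rangeProjection u = 1
  isPartialIsometrySystem : IsPartialIsometrySystem (B level) label (fun _ ↦ e) v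

attribute [instance] Stage.fintype

namespace Stage

variable {D D' : NonUnitalStarSubalgebra ℂ G} {B : ℕ → NonUnitalStarSubalgebra ℂ A} {P : ℕ → Set A}
  (σ : Stage D B P)

/-- The linear contraction `G → A` which on `D` replaces the matrix units `u` by `v`. -/
noncomputable def embed : G →ₗ[ℂ] A := matrixSum σ.v ∘ₗ coeff σ.label id σ.u

/-- The linear contraction `A → G` in the opposite direction, a left inverse of `embed` on `D`. -/
noncomputable def retract : A →ₗ[ℂ] G := matrixSum σ.u ∘ₗ coeff σ.label (fun _ ↦ σ.e) σ.v

/-- The projection of `A` onto the ranges of the partial isometries `v`. -/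
noncomputable def support : A := rangeProjection σ.v

theorem norm_embed_le (x : G) : ‖σ.embed x‖ ≤ ‖x‖ := by
  classical
  exact (σ.isPartialIsometrySystem.norm_matrixSum_le (coeff_mem_blockAlgebra _ _ _ _)).trans
    (σ.isMatrixUnitSystem.norm_coeff_le x)

theorem norm_retract_le (y : A) : ‖σ.retract y‖ ≤ ‖y‖ := by
  classical
  exact (σ.isMatrixUnitSystem.norm_matrixSum_le (coeff_mem_blockAlgebra _ _ _ _)).trans
    (σ.isPartialIsometrySystem.norm_coeff_le y)

theorem embed_mem (x : G) : σ.embed x ∈ B σ.level := σ.isPartialIsometrySystem.matrixSum_mem _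

theorem support_mem : σ.support ∈ B σ.level := by
  classical
  rw [support, ← matrixSum_one]
  exact σ.isPartialIsometrySystem.matrixSum_mem 1

theorem isStarProjection_support : IsStarProjection σ.support :=
  σ.isPartialIsometrySystem.isStarProjection_rangeProjection

theorem support_mul_embed (x : G) : σ.support * σ.embed x = σ.embed x :=
  σ.isPartialIsometrySystem.rangeProjection_mul_matrixSum _

theorem embed_mul_support (x : G) : σ.embed x * σ.support = σ.embed x :=
  σ.isPartialIsometrySystem.matrixSum_mul_rangeProjection (coeff_mem_blockAlgebra _ _ _ _)

theorem retract_support_mul (y : A) : σ.retract (σ.support * y) = σ.retract y :=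
  congrArg (matrixSum σ.u) (σ.isPartialIsometrySystem.coeff_rangeProjection_mul y)

theorem retract_embed {a : G} (ha : a ∈ D) : σ.retract (σ.embed a) = a :=
  (congrArg (matrixSum σ.u) <| σ.isPartialIsometrySystem.coeff_matrixSum <|
    coeff_mem_blockAlgebra _ _ _ _).trans <|
    σ.isMatrixUnitSystem.matrixSum_coeff_eq_self σ.isMatrixUnitSystem.disconnected ha
      (by rw [σ.rangeProjection_u, one_mul]) (by rw [σ.rangeProjection_u, mul_one])

/-- The stage with one index, available over the algebra of scalars. -/
def ofScalars [Nontrivial G] (h1 : 1 ∈ D) (hD : ∀ a ∈ D, ∃ c : ℂ, a = c • 1) {e : A}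
    (he : e ∈ P 0) (hemin : IsMinimalProjection (B 0) e) : Stage D B P where
  Index := PUnit
  fintype := inferInstance
  label _ := 1
  u _ := 1
  v _ := e
  level := 0
  e := e
  e_mem := he
  isMatrixUnitSystem :=
    { mem := fun _ ↦ h1
      isStarProjection := fun _ ↦ .one G
      ne_zero := fun _ ↦ one_ne_zero
      star_mul_self_eq := fun _ ↦ by simp
      star_mul_eq_zero := fun _ _ h ↦ absurd rfl h
      exists_smul_eq := fun a ha _ _ ↦ by simpa using hD a ha
      disconnected := fun _ _ _ _ h ↦ absurd rfl h }
  rangeProjection_u := by simp [rangeProjection]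
  isPartialIsometrySystem :=
    { mem := fun _ ↦ hemin.mem
      isStarProjection := fun _ ↦ hemin.isStarProjection
      ne_zero := fun _ ↦ hemin.ne_zero
      star_mul_self_eq := fun _ ↦ by
        rw [hemin.isStarProjection.isSelfAdjoint.star_eq,
          hemin.isStarProjection.isIdempotentElem.eq]
      star_mul_eq_zero := fun _ _ h ↦ absurd rfl h
      exists_smul_eq := fun a ha _ _ ↦ by
        rw [hemin.isStarProjection.isSelfAdjoint.star_eq]
        exact hemin.exists_smul_eq a ha }

/-- `τ` refines `σ`: it lies at a later level, its retraction extends that of `σ`, and cutting the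
embedding of `σ` down to the support of `τ` gives the embedding of `τ`. -/
structure IsRefinement (τ : Stage D' B P) (σ : Stage D B P) : Prop where
  level_lt : σ.level < τ.level
  retract_eq : ∀ y ∈ B σ.level, τ.retract y = σ.retract y
  embed_mul_support : ∀ a ∈ D, σ.embed a * τ.support = τ.embed a
  support_mul_embed : ∀ a ∈ D, τ.support * σ.embed a = τ.embed a
  support_mul_support : σ.support * τ.support = τ.support

section Refine

variable [DecidableEq G] {S : Type u} [Fintype S] {L' y i : S → G} {k : ℕ} {e : A} {w : S → A}
  (hBP : IsBranchingSystem B P) (hD : D ≤ D') (hy : IsMatrixUnitSystem D' L' y)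
  (hiy : ∀ α, i α * y α = y α)
  (hsum : ∀ t, ∑ α with σ.label t = i α, y α * star (y α) = σ.label t)
  (hk : σ.level < k) (he : e ∈ P k) (hw : IsIsometryFamily (B k) σ.e e w)

/-- The stage obtained by cutting each source of `σ` into the ranges of matrix units `y` of a larger
algebra `D'`, matched with partial isometries `w` into `σ.e`. -/
noncomputable def refine : Stage D' B P where
  Index := σ.label.Pullback i
  fintype := inferInstance
  label x := L' x.snd
  u x := σ.u x.fst * y x.snd
  v x := σ.v x.fst * w x.snd
  level := k
  e := e
  e_mem := he
  isMatrixUnitSystem := σ.isMatrixUnitSystem.refine hy hiy hD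
  rangeProjection_u :=
    (σ.isMatrixUnitSystem.rangeProjection_pullback hsum).trans σ.rangeProjection_u
  isPartialIsometrySystem := σ.isPartialIsometrySystem.refine
    (hw.isPartialIsometrySystem (hBP.isMinimalProjection k e he) L') hw.mul_eq
    (hBP.monotone hk.le)

theorem isRefinement_refine : (σ.refine hBP hD hy hiy hsum hk he hw).IsRefinement σ := by
  set τ := σ.refine hBP hD hy hiy hsum hk he hw
  have hu := σ.isMatrixUnitSystem
  have hv := σ.isPartialIsometrySystem
  have hw' := hw.isPartialIsometrySystem (hBP.isMinimalProjection k e he) L'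
  have hB := hBP.monotone hk.le
  have hembed {a : G} (ha : a ∈ D) : τ.embed a =
      matrixSum τ.v (refineMatrix σ.label i (coeff σ.label id σ.u a)) :=
    congrArg (matrixSum τ.v) (hu.coeff_refine hy.toIsPartialIsometrySystem hiy hD ha)
  refine ⟨hk, fun b hb ↦ ?_, fun a ha ↦ ?_, fun a ha ↦ ?_, ?_⟩
  · calc
      τ.retract b = matrixSum τ.u (refineMatrix σ.label i (coeff σ.label (fun _ ↦ σ.e) σ.v b)) :=
        congrArg (matrixSum τ.u) (hv.coeff_refine hw' hw.mul_eq hB hb)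
      _ = σ.retract b * rangeProjection τ.u :=
        (hu.matrixSum_mul_rangeProjection_refine hy.toIsPartialIsometrySystem hiy hD
          (coeff_mem_blockAlgebra _ _ _ _)).symm
      _ = σ.retract b := by rw [τ.rangeProjection_u, mul_one]
  · exact (hv.matrixSum_mul_rangeProjection_refine hw' hw.mul_eq hB
      (coeff_mem_blockAlgebra _ _ _ _)).trans (hembed ha).symm
  · exact (hv.rangeProjection_refine_mul_matrixSum hw' hw.mul_eq hB
      (coeff_mem_blockAlgebra _ _ _ _)).trans (hembed ha).symm
  · exact hv.rangeProjection_mul_rangeProjection_pullback w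

end Refine

theorem exists_isRefinement (hBP : IsBranchingSystem B P) (hD : D ≤ D') [FiniteDimensional ℂ D'] :
    ∃ τ : Stage D' B P, τ.IsRefinement σ := by
  classical
  obtain ⟨S, _, L', y, i, hy, hiy, hsum⟩ :=
    σ.isMatrixUnitSystem.exists_isMatrixUnitSystem_sum_eq hD
  obtain ⟨k, hk, e, he, w, hw⟩ := hBP.exists_isIsometryFamily_of_finite S σ.e_mem
  exact ⟨_, σ.isRefinement_refine hBP hD hy hiy hsum hk he hw⟩

/-- `J` lifts the embedding of `σ`: cutting it down to the support of `σ` on either side gives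
`σ.embed`. -/
structure IsLift (J : G →ₗ[ℂ] A) : Prop where
  norm_apply_le : ∀ x, ‖J x‖ ≤ ‖x‖
  apply_mem : ∀ x, J x ∈ B σ.level
  support_mul : ∀ x, σ.support * J x = σ.embed x
  mul_support : ∀ x, J x * σ.support = σ.embed x

theorem isLift_embed : σ.IsLift σ.embed :=
  ⟨σ.norm_embed_le, σ.embed_mem, σ.support_mul_embed, σ.embed_mul_support⟩

variable {σ} {τ : Stage D' B P} {J : G →ₗ[ℂ] A}

namespace IsLift

theorem retract_apply (hJ : σ.IsLift J) {a : G} (ha : a ∈ D) : σ.retract (J a) = a := by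
  rw [← σ.retract_support_mul, hJ.support_mul, σ.retract_embed ha]

theorem embed_add_compression (hJ : σ.IsLift J) (hτ : τ.IsRefinement σ)
    (hB : Monotone B) : τ.IsLift (τ.embed + compression τ.support ∘ₗ J) where
  norm_apply_le x := by
    have hq := τ.isStarProjection_support
    have horth : star (τ.embed x) * compression τ.support (J x) = 0 := by
      rw [← τ.support_mul_embed, star_mul, hq.isSelfAdjoint.star_eq, mul_assoc,
        mul_compression hq.isIdempotentElem, mul_zero]
    have horth' : τ.embed x * star (compression τ.support (J x)) = 0 := by
      rw [← τ.embed_mul_support, mul_assoc, ← hq.isSelfAdjoint.star_eq, ← star_mul,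
        hq.isSelfAdjoint.star_eq, compression_mul hq.isIdempotentElem, star_zero, mul_zero]
    exact (norm_add_eq_max_of_star_mul_eq_zero horth horth').trans_le <|
      max_le (τ.norm_embed_le x) ((norm_compression_le hq _).trans (hJ.norm_apply_le x))
  apply_mem x := add_mem (τ.embed_mem x)
    (compression_mem τ.support_mem (hB hτ.level_lt.le (hJ.apply_mem x)))
  support_mul x := by
    rw [LinearMap.add_apply, LinearMap.comp_apply, mul_add, τ.support_mul_embed,
      mul_compression τ.isStarProjection_support.isIdempotentElem, add_zero]
  mul_support x := by
    rw [LinearMap.add_apply, LinearMap.comp_apply, add_mul, τ.embed_mul_support,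
      compression_mul τ.isStarProjection_support.isIdempotentElem, add_zero]

theorem embed_add_compression_apply (hJ : σ.IsLift J) (hτ : τ.IsRefinement σ) {a : G}
    (ha : a ∈ D) : (τ.embed + compression τ.support ∘ₗ J) a = J a := by
  have hleft : τ.support * J a = τ.embed a := by
    have hsupport : τ.support * σ.support = τ.support := by
      simpa only [star_mul, σ.isStarProjection_support.isSelfAdjoint.star_eq,
        τ.isStarProjection_support.isSelfAdjoint.star_eq] using
        congrArg star hτ.support_mul_support
    rw [← hsupport, mul_assoc, hJ.support_mul, hτ.support_mul_embed a ha]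
  have hright : J a * τ.support = τ.embed a := by
    rw [← hτ.support_mul_support, ← mul_assoc, hJ.mul_support, hτ.embed_mul_support a ha]
  rw [LinearMap.add_apply, LinearMap.comp_apply, compression_apply, hleft, hright,
    τ.embed_mul_support]
  abel

end IsLift

end Stage

theorem exists_retraction_of_unital {B : ℕ → NonUnitalStarSubalgebra ℂ A} {P : ℕ → Set A}
    {H : ℕ → NonUnitalStarSubalgebra ℂ G} [Nontrivial G] (hB : IsAFPresentation A B)
    (hBP : IsBranchingSystem B P) (hH : IsAFPresentation G H) (h1 : 1 ∈ H 0)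
    (h0 : ∀ a ∈ H 0, ∃ c : ℂ, a = c • 1) :
    ∃ (r : A →L[ℂ] G) (j : G →L[ℂ] A), Function.LeftInverse r j := by
  let Lift (k : ℕ) := {S : Stage (H k) B P × (G →ₗ[ℂ] A) // S.1.IsLift S.2}
  have hstep (k : ℕ) (S : Lift k) : ∃ S' : Lift (k + 1), S'.1.1.IsRefinement S.1.1 ∧
      Set.EqOn S'.1.2 S.1.2 (H k) := by
    have _ := hH.2.1 (k + 1)
    obtain ⟨τ, hτ⟩ := S.1.1.exists_isRefinement hBP (hH.1 k.le_succ)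
    exact ⟨⟨(τ, _), S.2.embed_add_compression hτ hB.1⟩, hτ,
      fun a ha ↦ S.2.embed_add_compression_apply hτ ha⟩
  choose next hrefine hext using hstep
  obtain ⟨e, he⟩ := hBP.nonempty
  let σ₀ : Stage (H 0) B P := .ofScalars h1 h0 he (hBP.isMinimalProjection 0 e he)
  let S : ∀ k, Lift k := Nat.rec ⟨(σ₀, _), σ₀.isLift_embed⟩ next
  have hlevel : StrictMono fun k ↦ (S k).1.1.level :=
    strictMono_nat_of_lt_succ fun k ↦ (hrefine k (S k)).level_lt
  obtain ⟨j, hj⟩ := exists_continuousLinearMap_eqOn_of_contractive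
    (fun k l hkl ↦ hH.1 hkl) hH.2.2 (fun k ↦ (S k).1.2)
    (fun k ↦ (S k).2.norm_apply_le) fun k ↦ hext k (S k)
  obtain ⟨r, hr⟩ := exists_continuousLinearMap_eqOn_of_contractive
    (fun k l hkl ↦ hB.1 (hlevel.monotone hkl)) (hB.comp hlevel).2.2 (fun k ↦ (S k).1.1.retract)
    (fun k ↦ (S k).1.1.norm_retract_le) fun k ↦ (hrefine k (S k)).retract_eq
  refine ⟨r, j, congrFun (Continuous.ext_on hH.2.2 (r.comp j).continuous continuous_id
    fun x hx ↦ ?_)⟩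
  obtain ⟨k, hk⟩ := Set.mem_iUnion.1 hx
  calc
    r (j x) = (S k).1.1.retract ((S k).1.2 x) := by rw [hj k hk, hr k ((S k).2.apply_mem x)]
    _ = x := (S k).2.retract_apply hk

end Stages

section Unitization

variable {C : Type*} [NonUnitalCStarAlgebra C]

/-- The preimage of `D` in the unitization of the ambient algebra, spanned by `D` and the unit. -/
def unitizationSubalgebra (D : NonUnitalStarSubalgebra ℂ C) :
    NonUnitalStarSubalgebra ℂ (Unitization ℂ C) where
  carrier := {x : Unitization ℂ C | x.snd ∈ D}
  zero_mem' := zero_mem D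
  add_mem' {_ _} (hx : _ ∈ D) (hy : _ ∈ D) := add_mem hx hy
  smul_mem' c _ (hx : _ ∈ D) := SMulMemClass.smul_mem c hx
  mul_mem' {_ _} (hx : _ ∈ D) (hy : _ ∈ D) := add_mem
    (add_mem (SMulMemClass.smul_mem _ hy) (SMulMemClass.smul_mem _ hx)) (mul_mem hx hy)
  star_mem' {_} (hx : _ ∈ D) := star_mem hx

theorem mem_unitizationSubalgebra {D : NonUnitalStarSubalgebra ℂ C} {x : Unitization ℂ C} :
    x ∈ unitizationSubalgebra D ↔ x.snd ∈ D := Iff.rfl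

theorem _root_.IsAFPresentation.unitization {H : ℕ → NonUnitalStarSubalgebra ℂ C}
    (hH : IsAFPresentation C H) :
    IsAFPresentation (Unitization ℂ C) fun k ↦ unitizationSubalgebra (H k) := by
  obtain ⟨hmono, hfin, hdense⟩ := hH
  refine ⟨fun k l hkl x hx ↦ hmono hkl (mem_unitizationSubalgebra.1 hx), fun k ↦ ?_, ?_⟩
  · let coords : unitizationSubalgebra (H k) →ₗ[ℂ] ℂ × H k :=
      { toFun := fun x ↦ (x.1.fst, ⟨x.1.snd, x.2⟩)
        map_add' := fun _ _ ↦ rfl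
        map_smul' := fun _ _ ↦ rfl }
    refine .of_injective coords fun x y hxy ↦ Subtype.ext (Unitization.ext ?_ ?_)
    · exact congrArg (fun p ↦ p.1) hxy
    · exact congrArg (fun p ↦ (p.2 : C)) hxy
  · refine (hdense.preimage (isOpenMap_snd.comp
      Unitization.uniformEquivProd.toHomeomorph.isOpenMap)).mono fun x hx ↦ ?_
    obtain ⟨k, hk⟩ := Set.mem_iUnion.1 hx
    exact Set.mem_iUnion.2 ⟨k, hk⟩

theorem _root_.IsAFPresentation.cons_bot {H : ℕ → NonUnitalStarSubalgebra ℂ C}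
    (hH : IsAFPresentation C H) :
    IsAFPresentation C fun k ↦ Nat.casesOn k ⊥ H := by
  refine ⟨monotone_nat_of_le_succ ?_, ?_, hH.2.2.mono ?_⟩
  · rintro (_ | k)
    · exact bot_le
    · exact hH.1 k.le_succ
  · rintro (_ | k)
    · refine .of_injective (0 : (⊥ : NonUnitalStarSubalgebra ℂ C) →ₗ[ℂ] ℂ) fun x y _ ↦ ?_
      exact Subtype.ext <| (NonUnitalStarAlgebra.mem_bot.1 x.2).trans
        (NonUnitalStarAlgebra.mem_bot.1 y.2).symm
    · exact hH.2.1 k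
  · exact Set.iUnion_subset fun k ↦ Set.subset_iUnion_of_subset (k + 1) subset_rfl

theorem exists_retraction {A : Type*} [NonUnitalCStarAlgebra A]
    {B : ℕ → NonUnitalStarSubalgebra ℂ A} {P : ℕ → Set A}
    {H : ℕ → NonUnitalStarSubalgebra ℂ C} (hB : IsAFPresentation A B)
    (hBP : IsBranchingSystem B P) (hH : IsAFPresentation C H) :
    ∃ (r : A →L[ℂ] C) (j : C →L[ℂ] A), Function.LeftInverse r j := by
  obtain ⟨r, j, hrj⟩ := exists_retraction_of_unital hB hBP hH.cons_bot.unitization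
    (mem_unitizationSubalgebra.2 (zero_mem ⊥)) fun a ha ↦ ⟨a.fst, Unitization.ext (by simp)
      (by simpa [NonUnitalStarAlgebra.mem_bot] using mem_unitizationSubalgebra.1 ha)⟩
  let snd : Unitization ℂ C →L[ℂ] C :=
    ⟨⟨⟨fun x ↦ x.snd, fun _ _ ↦ rfl⟩, fun _ _ ↦ rfl⟩, Unitization.continuous_snd⟩
  let inr : C →L[ℂ] Unitization ℂ C :=
    ⟨Unitization.inrHom ℂ ℂ C, Unitization.continuous_inr⟩
  exact ⟨snd.comp r, j.comp inr, fun x ↦ congrArg snd (hrj x)⟩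

end Unitization

section Sequences

open Filter Topology ZeroAtInfty

variable {A : Type*} [NonUnitalCStarAlgebra A]

/-- The sequences in `D` which vanish from the index `k` on. -/
def truncatedSequences (D : NonUnitalStarSubalgebra ℂ A) (k : ℕ) :
    NonUnitalStarSubalgebra ℂ C₀(ℕ, A) where
  carrier := {f | ∀ n, f n ∈ D ∧ (k ≤ n → f n = 0)}
  zero_mem' _ := ⟨zero_mem D, fun _ ↦ rfl⟩
  add_mem' {f g} hf hg n := ⟨add_mem (hf n).1 (hg n).1, fun hn ↦ by
    rw [ZeroAtInftyContinuousMap.add_apply, (hf n).2 hn, (hg n).2 hn, add_zero]⟩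
  smul_mem' c f hf n := ⟨SMulMemClass.smul_mem c (hf n).1, fun hn ↦ by
    rw [ZeroAtInftyContinuousMap.smul_apply, (hf n).2 hn, smul_zero]⟩
  mul_mem' {f g} hf hg n := ⟨mul_mem (hf n).1 (hg n).1, fun hn ↦ by
    rw [ZeroAtInftyContinuousMap.mul_apply, (hf n).2 hn, zero_mul]⟩
  star_mem' {f} hf n := ⟨star_mem (hf n).1, fun hn ↦ by
    rw [ZeroAtInftyContinuousMap.star_apply, (hf n).2 hn, star_zero]⟩

theorem finiteDimensional_truncatedSequences (D : NonUnitalStarSubalgebra ℂ A)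
    [FiniteDimensional ℂ D] (k : ℕ) : FiniteDimensional ℂ (truncatedSequences D k) := by
  let terms : truncatedSequences D k →ₗ[ℂ] Fin k → D :=
    { toFun := fun f n ↦ ⟨f.1 n, (f.2 n).1⟩
      map_add' := fun _ _ ↦ rfl
      map_smul' := fun _ _ ↦ rfl }
  refine .of_injective terms fun f g hfg ↦ Subtype.ext (DFunLike.ext _ _ fun n ↦ ?_)
  obtain hn | hn := lt_or_ge n k
  · exact congrArg Subtype.val (congrFun hfg ⟨n, hn⟩)
  · rw [(f.2 n).2 hn, (g.2 n).2 hn]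

theorem dense_iUnion_truncatedSequences {S : ℕ → NonUnitalStarSubalgebra ℂ A} (hS : Monotone S)
    (hdense : Dense (⋃ k, (S k : Set A))) :
    Dense (⋃ k, (truncatedSequences (S k) k : Set C₀(ℕ, A))) := by
  refine Metric.dense_iff.2 fun f ε hε ↦ ?_
  obtain ⟨N, hN⟩ : ∃ N, ∀ n ≥ N, ‖f n‖ < ε / 2 := by
    have hlim := f.zero_at_infty'
    rw [cocompact_eq_atTop] at hlim
    simpa using Metric.tendsto_atTop.1 hlim (ε / 2) (half_pos hε)
  have hnear (n : ℕ) : ∃ a k, a ∈ S k ∧ ‖a - f n‖ < ε / 2 := by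
    obtain ⟨a, ha, hak⟩ := Metric.dense_iff.1 hdense (f n) (ε / 2) (half_pos hε)
    obtain ⟨k, hk⟩ := Set.mem_iUnion.1 hak
    exact ⟨a, k, hk, mem_ball_iff_norm.1 ha⟩
  choose a k hak hnear using hnear
  let g : C₀(ℕ, A) :=
    { toFun := fun n ↦ if n < N then a n else 0
      continuous_toFun := continuous_of_discreteTopology
      zero_at_infty' := by
        rw [cocompact_eq_atTop]
        refine tendsto_const_nhds.congr' ?_
        filter_upwards [eventually_ge_atTop N] with n hn using (if_neg hn.not_gt).symm }
  have hg (n : ℕ) : g n = if n < N then a n else 0 := rfl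
  refine ⟨g, mem_ball_iff_norm.2 ((BanachDecomposition.norm_le_of_forall_norm_apply_le
    (half_pos hε).le fun n ↦ ?_).trans_lt (half_lt_self hε)),
    Set.mem_iUnion.2 ⟨N ⊔ (Finset.range N).sup k, fun n ↦ ?_⟩⟩
  · rw [ZeroAtInftyContinuousMap.sub_apply, hg]
    split_ifs with hn
    · exact (hnear n).le
    · rw [zero_sub, norm_neg]
      exact (hN n (not_lt.1 hn)).le
  · rw [hg]
    split_ifs with hn
    · exact ⟨hS (le_sup_of_le_right (Finset.le_sup (Finset.mem_range.2 hn))) (hak n),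
        fun h ↦ absurd hn (le_sup_left.trans h).not_gt⟩
    · exact ⟨zero_mem _, fun _ ↦ rfl⟩

theorem _root_.IsAFPresentation.c₀ {S : ℕ → NonUnitalStarSubalgebra ℂ A}
    (hS : IsAFPresentation A S) :
    IsAFPresentation C₀(ℕ, A) fun k ↦ truncatedSequences (S k) k :=
  ⟨fun _ _ hkl _ hf n ↦ ⟨hS.1 hkl (hf n).1, fun hn ↦ (hf n).2 (hkl.trans hn)⟩,
    fun k ↦ have _ := hS.2.1 k; finiteDimensional_truncatedSequences (S k) k,
    dense_iUnion_truncatedSequences hS.1 hS.2.2⟩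

end Sequences

end AFPresentation

theorem fermion_presentation_linearly_homeomorphic_c0
    (A : Type*) [NonUnitalCStarAlgebra A]
    (hA : ∃ SA : ℕ → NonUnitalStarSubalgebra ℂ A,
      IsAFPresentation A SA ∧ HasFermionProperty A SA) :
    Nonempty (A ≃L[ℂ] ZeroAtInftyContinuousMap ℕ A) := by
  obtain ⟨S, hS, hfermion⟩ := hA
  obtain ⟨B, P, hB, hBP⟩ := AFPresentation.exists_isBranchingSystem hS hfermion
  obtain ⟨r, j, hrj⟩ := AFPresentation.exists_retraction hB hBP hB.c₀
  exact BanachDecomposition.nonempty_equiv_c₀_of_retraction r j hrj
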